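/- Assume Schanuel's Conjecture. Let f, g ∈ 𝓔 be nonzero exponential polynomials with f irreducible. If f and g have infinitely many common zeros in ℂ, then f divides g in the ring 𝓔. -/

import Mathlib

open Complex Set

noncomputable section

/-- `f` is an exponential polynomial, i.e. an element of the ring `𝓔`. -/
def IsExpPoly (f : ℂ → ℂ) : Prop :=
  ∃ (N : ℕ) (lam mu : Fin N → ℂ),
    ∀ z : ℂ, f z = ∑ i, lam i * Complex.exp (mu i * z)

/-- `h` divides `f` in the ring `𝓔`. -/
def EDvd (h f : ℂ → ℂ) : Prop :=
  ∃ q : ℂ → ℂ, IsExpPoly q ∧ f = h * q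

/-- `f` is a unit of the ring `𝓔`. -/
def EUnit (f : ℂ → ℂ) : Prop :=
  IsExpPoly f ∧ ∃ g : ℂ → ℂ, IsExpPoly g ∧ f * g = 1

/-- `f` is irreducible in the ring `𝓔`. -/
def EIrreducible (f : ℂ → ℂ) : Prop :=
  IsExpPoly f ∧ f ≠ 0 ∧ ¬ EUnit f ∧
    ∀ g h : ℂ → ℂ, IsExpPoly g → IsExpPoly h → f = g * h → EUnit g ∨ EUnit h

/-- canonical representation: pairwise distinct exponents, nonzero coefficients. -/
def IsCanonicalRep (f : ℂ → ℂ) {N : ℕ} (lam mu : Fin N → ℂ) : Prop :=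
  (∀ i, lam i ≠ 0) ∧ Function.Injective mu ∧
    ∀ z : ℂ, f z = ∑ i, lam i * Complex.exp (mu i * z)

/-- `f` is a simple exponential polynomial: its support has `ℚ`-dimension 1. -/
def IsSimple (f : ℂ → ℂ) : Prop :=
  ∃ (N : ℕ) (lam mu : Fin N → ℂ), IsCanonicalRep f lam mu ∧
    Module.finrank ℚ (Submodule.span ℚ (Set.range mu)) = 1

/-- Transcendence degree over `ℚ` of (the field generated by) a set of complex numbers. -/
noncomputable def trdegQ (s : Set ℂ) : Cardinal.{0} :=
  ⨆ t : {t : Finset ℂ // ↑t ⊆ s ∧ AlgebraicIndependent ℚ (Subtype.val : {x : ℂ // x ∈ t} → ℂ)},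
    (t.1.card : Cardinal)

/-- Schanuel's Conjecture. -/
def SchanuelConjecture : Prop :=
  ∀ (n : ℕ) (lam : Fin n → ℂ), LinearIndependent ℚ lam →
    (n : Cardinal) ≤ trdegQ (Set.range lam ∪ Set.range fun i => Complex.exp (lam i))

/-!
Write `f = ∑ c_b e^{bz}`, and suppose that `f` is irreducible, does not divide `g`, and has
infinitely many zeros in common with `g`.

By Schanuel's conjecture the common zeros lie in the algebraic closure of a finitely generated
field: in terms of exponentials `e^{β_i z}` with `ℚ`-linearly independent `β_i` the two equations
are coprime, so at each common zero they cut out a set of codimension two, and a large number of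
independent zeros would then violate the conjecture.

Pass to an infinite set `S` of common zeros and a set `I` of exponents on which `∑_{b ∈ I} c_b
e^{bz}` vanishes with no proper vanishing subsum. Schanuel's conjecture again confines the numbers
`(b - b')z` to a finite-dimensional rational vector space. Each `e^{(b - b')(z - z')}` is then
algebraic, after shrinking `S`: otherwise choose a derivation and a valuation, trivial on the
constants of the derivation, that detect its transcendence; Wronskian elimination shows that the
relation admits only finitely many values of some `v(e^{(b - b')z})`. Under Schanuel's conjecture
algebraicity of four such exponentials forces either the exponents in `I` to be commensurable
modulo translation, or `S` to lie on a rational line `z₀ + ℚu`. In the second case the relation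
becomes one between rational powers of algebraic numbers. With bounded denominators the
Skolem–Mahler–Lech theorem, and with unbounded ones Kummer theory, shows that these numbers are
roots of unity, so the exponents are commensurable in this case too.

For commensurable exponents the relation is a polynomial equation in a single `e^{βz}`, which takes
finitely many values; hence on an infinite subset all `e^{(b - b')(z - z')}` are `1`. Treating one
minimal vanishing subsum of `f` after another, one finds `z ≠ z'` such that `f` vanishes on the
progression `z + m(z' - z)`. So a factor `1 - e^{2πi(x - z)/(z' - z)}`, which is reducible, divides
`f`.
-/

section Derivation

open Polynomial KaehlerDifferential TensorProduct

theorem formallySmooth_of_charZero (K L : Type*) [Field K] [CharZero K] [Field L] [Algebra K L] :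
    Algebra.FormallySmooth K L := by
  obtain ⟨s, hs⟩ := exists_isTranscendenceBasis K L
  have : Algebra.IsAlgebraic (IntermediateField.adjoin K (range ((↑) : s → L))) L :=
    hs.isAlgebraic_field
  exact .of_algebraicIndependent_of_isSeparable hs.1

theorem mapBaseChange_injective_of_formallySmooth (R A B : Type*) [CommRing R] [CommRing A]
    [CommRing B] [Algebra R A] [Algebra R B] [Algebra A B] [IsScalarTower R A B]
    [Algebra.FormallySmooth A B] : Function.Injective (mapBaseChange R A B) := by
  refine (injective_iff_map_eq_zero _).2 fun x hx => ?_
  obtain ⟨y, rfl⟩ := (Algebra.H1Cotangent.exact_δ_mapBaseChange R A B x).1 hx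
  rw [Subsingleton.elim y 0, map_zero]

theorem exists_derivation_apply_ne_zero {k L : Type*} [Field k] [CharZero k] [Field L]
    [Algebra k L] {t : L} (ht : Transcendental k t) : ∃ D : Derivation k L L, D t ≠ 0 := by
  let _ : Algebra k[X] L := (aeval t).toAlgebra
  have : IsScalarTower k k[X] L := .of_algebraMap_eq' (aeval t).comp_algebraMap.symm
  have : FaithfulSMul k[X] L :=
    (faithfulSMul_iff_algebraMap_injective _ _).2 (transcendental_iff_injective.1 ht)
  let _ : Algebra (FractionRing k[X]) L := FractionRing.liftAlgebra _ L
  have : IsScalarTower k[X] (FractionRing k[X]) L := FractionRing.isScalarTower_liftAlgebra _ L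
  have : Algebra.FormallySmooth k[X] (FractionRing k[X]) :=
    .of_isLocalization (nonZeroDivisors k[X])
  have := formallySmooth_of_charZero (FractionRing k[X]) L
  have : Algebra.FormallySmooth k[X] L := .comp k[X] (FractionRing k[X]) L
  have tmul_dX_ne_zero : (1 : L) ⊗ₜ[k[X]] D k k[X] X ≠ 0 := fun h => by
    have := congrArg (TensorProduct.lid k[X] L ∘ TensorProduct.comm k[X] L k[X] ∘
      (polynomialEquiv k).toLinearMap.lTensor L) h
    simp at this
  have dt_ne_zero : D k L t ≠ 0 := fun h => by
    refine tmul_dX_ne_zero (mapBaseChange_injective_of_formallySmooth k k[X] L ?_)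
    have algebraMap_X : algebraMap k[X] L X = t := aeval_X t
    rw [mapBaseChange_tmul, map_D, algebraMap_X, h, smul_zero, map_zero]
  obtain ⟨φ, hφ⟩ := not_forall.1 (mt (Module.forall_dual_apply_eq_zero_iff L _).1 dt_ne_zero)
  exact ⟨φ.compDer (D k L), hφ⟩

end Derivation

section AlgebraicClosure

variable (F : Type*) {E : Type*} [Field F] [Field E] [Algebra F E]

/-- The algebraic closure in `E` of the field `F(Y)` generated by a set `Y`; it is the closure of
`Y` in the algebraic independence matroid. -/
def acl (Y : Set E) : IntermediateField F E :=
  (algebraicClosure (IntermediateField.adjoin F Y) E).restrictScalars F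

variable {F} {Y Z : Set E} {x : E}

theorem mem_acl_iff : x ∈ acl F Y ↔ IsAlgebraic (Algebra.adjoin F Y) x :=
  mem_algebraicClosure_iff'.trans
    (isAlgebraic_iff_isIntegral.symm.trans IntermediateField.isAlgebraic_adjoin_iff)

variable (F) in
theorem coe_acl (Y : Set E) :
    (acl F Y : Set E) = (AlgebraicIndependent.matroid F E).closure Y := by
  ext x
  rw [AlgebraicIndependent.matroid_closure_eq]
  exact mem_acl_iff

theorem subset_acl : Y ⊆ acl F Y :=
  coe_acl F Y ▸ Matroid.subset_closure _ _ (subset_univ Y)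

theorem acl_le_acl (h : Y ⊆ acl F Z) : acl F Y ≤ acl F Z := by
  rw [← SetLike.coe_subset_coe, coe_acl, coe_acl]
  exact Matroid.closure_subset_closure_of_subset_closure (coe_acl F Z ▸ h)

theorem acl_mono (h : Y ⊆ Z) : acl F Y ≤ acl F Z :=
  acl_le_acl (h.trans subset_acl)

theorem mem_acl_of_isAlgebraic_acl (h : IsAlgebraic (acl F Y) x) : x ∈ acl F Y := by
  have : IsAlgebraic (algebraicClosure (IntermediateField.adjoin F Y) E) x := h
  exact mem_algebraicClosure_iff'.2 (this.restrictScalars _).isIntegral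

theorem mem_acl_of_isAlgebraic (h : IsAlgebraic F x) : x ∈ acl F Y :=
  mem_acl_of_isAlgebraic_acl (h.extendScalars (FaithfulSMul.algebraMap_injective _ _))

theorem isAlgebraic_of_mem_acl_empty (h : x ∈ acl F (∅ : Set E)) : IsAlgebraic F x := by
  rw [mem_acl_iff, Algebra.adjoin_empty] at h
  exact h.restrictScalars F

theorem mem_acl_of_pow_mem {n : ℕ} (hn : n ≠ 0) (h : x ^ n ∈ acl F Y) : x ∈ acl F Y :=
  mem_acl_of_isAlgebraic_acl <|
    .of_pow (Nat.pos_of_ne_zero hn) (isAlgebraic_algebraMap (⟨_, h⟩ : acl F Y))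

theorem exists_mem_acl_of_not_algebraicIndependent {ι : Type*} {x : ι → E}
    (h : ¬ AlgebraicIndependent (acl F Y) x) : ∃ i, x i ∈ acl F (Y ∪ x '' {i}ᶜ) := by
  by_contra! notMem
  refine h (algebraicIndependent_of_finite_type' (FaithfulSMul.algebraMap_injective _ _) ?_)
  intro t _ _ i hit hi
  have acl_le : acl F Y ≤ acl F (Y ∪ x '' {i}ᶜ) := acl_mono subset_union_left
  have image_subset : x '' t ⊆ acl F (Y ∪ x '' {i}ᶜ) :=
    (image_mono fun j hj => ne_of_mem_of_not_mem hj hit).trans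
      (subset_union_right.trans subset_acl)
  have adjoin_le : Algebra.adjoin (acl F Y) (x '' t) ≤
      (IntermediateField.extendScalars acl_le).toSubalgebra :=
    Algebra.adjoin_le image_subset
  have hi' : IsAlgebraic (IntermediateField.extendScalars acl_le).toSubalgebra (x i) :=
    hi.tower_top_of_subalgebra_le adjoin_le
  exact notMem i (mem_acl_of_isAlgebraic_acl hi')

theorem card_le_card_of_subset_acl {s t : Finset E}
    (hs : AlgebraicIndependent F (Subtype.val : s → E)) (hst : (s : Set E) ⊆ acl F (t : Set E)) :
    s.card ≤ t.card := by
  have hs' : (AlgebraicIndependent.matroid F E).Indep s := hs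
  have encard_le := hs'.encard_le_eRk_of_subset (coe_acl F (t : Set E) ▸ hst)
  rw [Matroid.eRk_closure_eq] at encard_le
  simpa using encard_le.trans (Matroid.eRk_le_encard _ _)

end AlgebraicClosure

theorem SchanuelConjecture.card_le_card (hSC : SchanuelConjecture) {ι : Type*} [Fintype ι]
    {w : ι → ℂ} (hw : LinearIndependent ℚ w) {Y : Finset ℂ}
    (mem_acl : ∀ i, w i ∈ acl ℚ (Y : Set ℂ)) (exp_mem_acl : ∀ i, exp (w i) ∈ acl ℚ (Y : Set ℂ)) :
    Fintype.card ι ≤ Y.card := by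
  let e := Fintype.equivFin ι
  have trdegQ_le : trdegQ (range (w ∘ e.symm) ∪ range fun i => exp ((w ∘ e.symm) i)) ≤ Y.card := by
    refine ciSup_le' fun ⟨t, ht, t_indep⟩ => Nat.cast_le.2 (card_le_card_of_subset_acl t_indep ?_)
    refine ht.trans (union_subset ?_ ?_) <;> rintro _ ⟨i, rfl⟩
    exacts [mem_acl _, exp_mem_acl _]
  exact_mod_cast (hSC _ _ (hw.comp _ e.symm.injective)).trans trdegQ_le

section LinearIndependence

theorem sum_filter_eq_zero_of_linearIndependent {R M ι κ : Type*} [Semiring R] [AddCommMonoid M]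
    [Module R M] [DecidableEq κ] {e : κ → M} (he : LinearIndependent R e) {s : Finset ι} {c : ι → R}
    {k : ι → κ} (h : ∑ i ∈ s, c i • e (k i) = 0) (k₀ : κ) : ∑ i ∈ s with k i = k₀, c i = 0 := by
  have sum_single_eq_zero : ∑ i ∈ s, Finsupp.single (k i) (c i) = 0 := by
    refine he ?_
    simpa only [map_sum, Finsupp.linearCombination_single, map_zero] using h
  simpa only [Finsupp.finsetSum_apply, Finsupp.single_apply, Finset.sum_filter,
    Finsupp.zero_apply] using DFunLike.congr_fun sum_single_eq_zero k₀

theorem sum_filter_eq_zero_of_sum_mul_char_eq_zero {G L ι : Type*} [MulOneClass G] [CommRing L]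
    [IsDomain L] [DecidableEq (G →* L)] {s : Finset ι} {c : ι → L} {χ : ι → G →* L}
    (h : ∀ g, ∑ i ∈ s, c i * χ i g = 0) (ψ : G →* L) : ∑ i ∈ s with χ i = ψ, c i = 0 :=
  sum_filter_eq_zero_of_linearIndependent (linearIndependent_monoidHom G L)
    (funext fun g => by simpa using h g) ψ

theorem sum_filter_eq_zero_of_sum_mul_pow_eq_zero {L ι : Type*} [CommRing L] [IsDomain L]
    [DecidableEq L] {s : Finset ι} {c a : ι → L} (h : ∀ m : ℕ, ∑ i ∈ s, c i * a i ^ m = 0)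
    (α : L) : ∑ i ∈ s with a i = α, c i = 0 := by
  classical
  simpa only [EmbeddingLike.apply_eq_iff_eq] using
    sum_filter_eq_zero_of_sum_mul_char_eq_zero (χ := fun i => powersHom L (a i))
      (fun g : Multiplicative ℕ => h g.toAdd) (powersHom L α)

theorem sum_smul_comp_eq_zero {R M ι κ : Type*} [Semiring R] [AddCommMonoid M] [Module R M]
    [DecidableEq κ] {s : Finset ι} {c : ι → R} {a : ι → κ}
    (h : ∀ α, ∑ i ∈ s with a i = α, c i = 0) (v : κ → M) : ∑ i ∈ s, c i • v (a i) = 0 := by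
  rw [← Finset.sum_fiberwise_of_maps_to (t := s.image a) fun i hi => Finset.mem_image_of_mem a hi]
  refine Finset.sum_eq_zero fun α _ => ?_
  rw [← zero_smul R (v α), ← h α, Finset.sum_smul]
  exact Finset.sum_congr rfl fun i hi => by rw [(Finset.mem_filter.1 hi).2]

theorem one_sub_dvd_zpow_sub_one {R : Type*} [CommRing R] (u : Rˣ) (n : ℤ) :
    (1 - u : R) ∣ ↑(u ^ n) - 1 := by
  rw [← Ideal.mem_span_singleton, ← Ideal.Quotient.eq]
  have map_u : Units.map (Ideal.Quotient.mk (Ideal.span {(1 - u : R)})).toMonoidHom u = 1 :=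
    Units.ext <| .symm <| Ideal.Quotient.eq.2 <| Ideal.mem_span_singleton_self _
  have := congrArg Units.val (map_zpow (Units.map (Ideal.Quotient.mk
    (Ideal.span {(1 - u : R)})).toMonoidHom) u n)
  rwa [map_u, one_zpow, Units.val_one, Units.coe_map] at this

end LinearIndependence

section ExpPolyRing

theorem isExpPoly_sum {ι : Type*} (s : Finset ι) (c e : ι → ℂ) :
    IsExpPoly fun z => ∑ i ∈ s, c i * exp (e i * z) := by
  refine ⟨s.card, c ∘ (↑) ∘ s.equivFin.symm, e ∘ (↑) ∘ s.equivFin.symm, fun z => ?_⟩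
  exact (s.sum_coe_sort _).symm.trans (s.equivFin.symm.sum_comp _).symm

/-- The ring `𝓔` of exponential polynomials. -/
def expPolyRing : Subalgebra ℂ (ℂ → ℂ) where
  carrier := {f | IsExpPoly f}
  add_mem' := by
    rintro f g ⟨N, l, m, hf⟩ ⟨N', l', m', hg⟩
    convert! isExpPoly_sum Finset.univ (Sum.elim l l') (Sum.elim m m') using 2 with z
    simp [hf, hg]
  mul_mem' := by
    rintro f g ⟨N, l, m, hf⟩ ⟨N', l', m', hg⟩
    convert! isExpPoly_sum Finset.univ (fun x : Fin N × Fin N' => l x.1 * l' x.2)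
      (fun x => m x.1 + m' x.2) using 2 with z
    simp [hf, hg, Finset.sum_mul_sum, Fintype.sum_prod_type, add_mul, exp_add, mul_mul_mul_comm]
  algebraMap_mem' r := ⟨1, fun _ => r, 0, by simp⟩

theorem IsExpPoly.exists_finset_eq_sum {f : ℂ → ℂ} (hf : IsExpPoly f) :
    ∃ (I : Finset ℂ) (c : ℂ → ℂ), ∀ z, f z = ∑ b ∈ I, c b * exp (b * z) := by
  classical
  obtain ⟨N, l, m, hf⟩ := hf
  refine ⟨Finset.univ.image m, fun b => ∑ i with m i = b, l i, fun z => ?_⟩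
  rw [hf, ← Finset.sum_fiberwise_of_maps_to fun i hi => Finset.mem_image_of_mem m hi]
  refine Finset.sum_congr rfl fun b _ => ?_
  rw [Finset.sum_mul]
  exact Finset.sum_congr rfl fun i hi => by rw [(Finset.mem_filter.1 hi).2]

variable {f g : expPolyRing}

theorem eDvd_iff_dvd : EDvd f g ↔ f ∣ g :=
  ⟨fun ⟨q, hq, h⟩ => ⟨⟨q, hq⟩, Subtype.ext h⟩, fun ⟨q, h⟩ => ⟨q, q.2, congrArg Subtype.val h⟩⟩

theorem eUnit_iff_isUnit : EUnit f ↔ IsUnit f :=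
  ⟨fun ⟨_, q, hq, h⟩ => IsUnit.of_mul_eq_one ⟨q, hq⟩ (Subtype.ext h),
    fun h => ⟨f.2, _, (↑h.unit⁻¹ : expPolyRing).2, congrArg Subtype.val h.mul_val_inv⟩⟩

theorem EIrreducible.irreducible (hf : EIrreducible f) : Irreducible f where
  not_isUnit := mt eUnit_iff_isUnit.2 hf.2.2.1
  isUnit_or_isUnit a b h :=
    (hf.2.2.2 a b a.2 b.2 (congrArg Subtype.val h)).imp eUnit_iff_isUnit.1 eUnit_iff_isUnit.1

theorem apply_ne_zero_of_isUnit (hf : IsUnit f) (z : ℂ) : f.1 z ≠ 0 :=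
  (((Pi.evalRingHom _ z).comp expPolyRing.val.toRingHom).isUnit_map hf).ne_zero

/-- The unit `z ↦ exp (μ * (z - z₀))` of `𝓔`, as a homomorphism in the exponent `μ`. -/
def expUnit (z₀ : ℂ) : Multiplicative ℂ →* expPolyRingˣ :=
  MonoidHom.toHomUnits
    { toFun μ := ⟨fun z => exp (μ.toAdd * (z - z₀)), 1, fun _ => exp (-μ.toAdd * z₀),
        fun _ => μ.toAdd, fun z => by
          rw [Fin.sum_univ_one, ← exp_add]
          ring_nf⟩
      map_one' := Subtype.ext <| funext fun z => by simp
      map_mul' μ ν := Subtype.ext <| funext fun z => by simp [add_mul, exp_add] }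

theorem expUnit_apply (z₀ μ z : ℂ) :
    (expUnit z₀ (.ofAdd μ) : expPolyRing).1 z = exp (μ * (z - z₀)) :=
  rfl

theorem exists_expUnit_eq_mul_zpow (z₀ : ℂ) {b b' ω : ℂ} (hω : ω ≠ 0)
    (h : exp (b * ω) = exp (b' * ω)) :
    ∃ n : ℤ, expUnit z₀ (.ofAdd b) =
      expUnit z₀ (.ofAdd b') * expUnit z₀ (.ofAdd (2 * Real.pi * I / ω)) ^ n := by
  obtain ⟨n, hn⟩ := exp_eq_exp_iff_exists_int.1 h
  refine ⟨n, ?_⟩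
  rw [← map_zpow, ← map_mul, ← ofAdd_zsmul, ← ofAdd_add]
  congr 2
  rw [zsmul_eq_mul]
  field_simp
  rw [hn]
  ring

theorem one_sub_expUnit_dvd_of_progression {z₀ ω : ℂ} (hω : ω ≠ 0)
    (h : ∀ m : ℕ, f.1 (z₀ + m * ω) = 0) :
    (1 - expUnit z₀ (.ofAdd (2 * Real.pi * I / ω)) : expPolyRing) ∣ f := by
  classical
  obtain ⟨I, c, hc⟩ := f.2.exists_finset_eq_sum
  set u := expUnit z₀ (.ofAdd (2 * Real.pi * Complex.I / ω))
  let d (b : ℂ) : ℂ := c b * exp (b * z₀)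
  have f_eq : f = ∑ b ∈ I, d b • (expUnit z₀ (.ofAdd b) : expPolyRing) := by
    ext z
    simp [hc, d, expUnit_apply, mul_assoc, ← exp_add, mul_sub]
  have sum_pow_eq_zero (m : ℕ) : ∑ b ∈ I, d b * exp (b * ω) ^ m = 0 := by
    rw [← h m, hc]
    refine Finset.sum_congr rfl fun b _ => ?_
    rw [mul_assoc, ← exp_nat_mul, ← exp_add]
    ring_nf
  let r (α : ℂ) : expPolyRing := expUnit z₀ (.ofAdd (log α / ω))
  have sum_reduced_eq_zero : ∑ b ∈ I, d b • r (exp (b * ω)) = 0 :=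
    sum_smul_comp_eq_zero (sum_filter_eq_zero_of_sum_mul_pow_eq_zero sum_pow_eq_zero) r
  rw [f_eq, ← sub_zero (Finset.sum _ _), ← sum_reduced_eq_zero, ← Finset.sum_sub_distrib]
  refine Finset.dvd_sum fun b _ => ?_
  obtain ⟨n, hn⟩ := exists_expUnit_eq_mul_zpow z₀ (b := b) (b' := log (exp (b * ω)) / ω) hω <| by
    rw [div_mul_cancel₀ _ hω, exp_log (exp_ne_zero _)]
  rw [← smul_sub, hn, Units.val_mul, ← mul_sub_one]
  exact dvd_smul_of_dvd _ ((one_sub_dvd_zpow_sub_one u n).mul_left _)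

/-- Such an `f` is a multiple of `1 - s ^ 2 = (1 - s) * (1 + s)` for an exponential `s`, and both
factors have zeros. -/
theorem not_irreducible_of_progression {z₀ ω : ℂ} (hω : ω ≠ 0)
    (h : ∀ m : ℕ, f.1 (z₀ + m * ω) = 0) : ¬ Irreducible f := fun hf => by
  let s : expPolyRing := expUnit z₀ (.ofAdd (Real.pi * I / ω))
  have s_mul_s : s * s = expUnit z₀ (.ofAdd (2 * Real.pi * I / ω)) := by
    rw [← Units.val_mul, ← map_mul, ← ofAdd_add]
    ring_nf
  obtain ⟨q, hq⟩ := one_sub_expUnit_dvd_of_progression hω h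
  have f_eq : f = (1 - s) * ((1 + s) * q) := by
    rw [hq, ← s_mul_s]
    ring
  rcases hf.isUnit_or_isUnit f_eq with h_unit | h_unit
  · refine apply_ne_zero_of_isUnit h_unit z₀ ?_
    simp [s, expUnit_apply]
  · refine apply_ne_zero_of_isUnit (isUnit_of_mul_isUnit_left h_unit) (z₀ + ω) ?_
    simp [s, expUnit_apply, hω]

end ExpPolyRing

section AlgebraicityOfCommonZeros

theorem dvd_of_irreducible_of_eval₂_eq_zero {R L : Type*} [CommRing R] [IsDomain R]
    [UniqueFactorizationMonoid R] [Field L] {P Q : Polynomial R} (hP : Irreducible P) {ψ : R →+* L}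
    (hψ : Function.Injective ψ) {x : L} (hPx : P.eval₂ ψ x = 0) (hQx : Q.eval₂ ψ x = 0) :
    P ∣ Q := by
  let K := FractionRing R
  have degree_ne_zero : P.natDegree ≠ 0 := fun hd => hP.ne_zero <| by
    rw [Polynomial.eq_C_of_natDegree_eq_zero hd, Polynomial.eval₂_C, map_eq_zero_iff ψ hψ] at hPx
    rw [Polynomial.eq_C_of_natDegree_eq_zero hd, hPx, map_zero]
  have primitive := hP.isPrimitive degree_ne_zero
  rw [primitive.dvd_iff_fraction_map_dvd_fraction_map K]
  by_contra not_dvd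
  obtain ⟨a, b, hab⟩ := ((primitive.irreducible_iff_irreducible_map_fraction_map
    (K := K)).1 hP).coprime_iff_not_dvd.2 not_dvd
  have lift_comp : (IsFractionRing.lift hψ).comp (algebraMap R K) = ψ :=
    RingHom.ext (IsFractionRing.lift_algebraMap hψ)
  have := congrArg (Polynomial.eval₂ (IsFractionRing.lift hψ) x) hab
  simp [Polynomial.eval₂_map, lift_comp, hPx, hQx] at this

theorem not_algebraicIndependent_of_aeval_eq_zero {σ K L : Type*} [Field K] [Field L] [Algebra K L]
    {P Q : MvPolynomial σ K} (hP : Irreducible P) (hPQ : ¬ P ∣ Q) {x : σ → L}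
    (hPx : MvPolynomial.aeval x P = 0) (hQx : MvPolynomial.aeval x Q = 0) (i : σ) :
    ¬ AlgebraicIndependent K fun j : {j // j ≠ i} => x j := by
  classical
  intro indep
  let e := (MvPolynomial.renameEquiv K (Equiv.optionSubtypeNe i).symm).trans
    (MvPolynomial.optionEquivLeft K {j // j ≠ i})
  let ψ := (MvPolynomial.aeval (R := K) fun j : {j // j ≠ i} => x j).toRingHom
  have eval₂_e (F : MvPolynomial σ K) : (e F).eval₂ ψ (x i) = MvPolynomial.aeval x F := by
    induction F using MvPolynomial.induction_on with
    | C a => simp [e, ψ]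
    | add p q hp hq => rw [map_add, Polynomial.eval₂_add, hp, hq, map_add]
    | mul_X p j hp =>
      rw [map_mul, Polynomial.eval₂_mul, hp, map_mul]
      congr 1
      by_cases hj : j = i
      · subst hj
        simp [e, ψ]
      · simp [e, ψ, Equiv.optionSubtypeNe_symm_of_ne hj]
  have e_dvd : e P ∣ e Q := dvd_of_irreducible_of_eval₂_eq_zero ((MulEquiv.irreducible_iff e).2 hP)
    indep ((eval₂_e P).trans hPx) ((eval₂_e Q).trans hQx)
  exact hPQ ((map_dvd_iff e).1 e_dvd)

theorem exists_finset_card_add_two_le {F E ι : Type*} [Field F] [Field E] [Algebra F E] [Fintype ι]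
    {Y : Set E} {P Q : MvPolynomial ι (acl F Y)} (hP : Irreducible P) (hPQ : ¬ P ∣ Q) {x : ι → E}
    (hPx : MvPolynomial.aeval x P = 0) (hQx : MvPolynomial.aeval x Q = 0) :
    ∃ s : Finset ι, s.card + 2 ≤ Fintype.card ι ∧ ∀ i, x i ∈ acl F (Y ∪ x '' s) := by
  classical
  have dependent : ¬ AlgebraicIndependent (acl F Y) x :=
    fun h => hP.ne_zero (h (hPx.trans (map_zero _).symm))
  obtain ⟨i, hi⟩ := exists_mem_acl_of_not_algebraicIndependent dependent
  obtain ⟨⟨j, hji⟩, hj⟩ := exists_mem_acl_of_not_algebraicIndependent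
    (not_algebraicIndependent_of_aeval_eq_zero hP hPQ hPx hQx i)
  let s : Finset ι := {i, j}ᶜ
  have mem_acl_of_ne (k : ι) (hk : k ≠ i) : x k ∈ acl F (Y ∪ x '' s) := by
    by_cases hkj : k = j
    · refine hkj ▸ acl_mono (union_subset_union_right _ ?_) hj
      rintro _ ⟨⟨l, hl⟩, hlj, rfl⟩
      exact ⟨l, by simpa [s, hl] using hlj, rfl⟩
    · exact subset_acl (Or.inr ⟨k, by simp [s, hk, hkj], rfl⟩)
  refine ⟨s, ?_, fun k => ?_⟩
  · rw [← Finset.card_pair hji.symm, Finset.card_compl_add_card]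
  · by_cases hk : k = i
    · refine hk ▸ acl_le_acl (union_subset (subset_union_left.trans subset_acl) ?_) hi
      rintro _ ⟨l, hl, rfl⟩
      exact mem_acl_of_ne l hl
    · exact mem_acl_of_ne k hk

theorem exists_linearIndependent_span_int_eq {E : Type*} [AddCommGroup E] [Module ℚ E]
    {J : Set E} (hJ : J.Finite) : ∃ (n : ℕ) (β : Fin n → E), LinearIndependent ℚ β ∧
      Submodule.span ℤ (range β) = Submodule.span ℤ J := by
  let A : Submodule ℤ E := Submodule.span ℤ J
  have : Module.Finite ℤ A := .span_of_finite ℤ hJ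
  have : IsAddTorsionFree E := .of_module_rat E
  let B := Module.finBasis ℤ A
  refine ⟨_, A.subtype ∘ B, ?_, ?_⟩
  · rw [← LinearIndependent.iff_fractionRing ℤ ℚ]
    exact B.linearIndependent.map' A.subtype A.ker_subtype
  · rw [range_comp, ← Submodule.map_span, B.span_eq, Submodule.map_top, Submodule.range_subtype]

theorem exists_irreducible_associated_map {A B F : Type*} [CommMonoidWithZero A] [WfDvdMonoid A]
    [CommMonoidWithZero B] [FunLike F A B] [MonoidWithZeroHomClass F A B] (φ : F) {f : B}
    (hf : Irreducible f) {P : A} (h : Associated f (φ P)) :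
    ∃ p, Irreducible p ∧ Associated f (φ p) := by
  induction P using WfDvdMonoid.induction_on_irreducible with
  | zero => exact absurd ((map_zero φ ▸ h).eq_zero_iff.2 rfl) hf.ne_zero
  | unit P hP => exact absurd (h.isUnit_iff.2 (hP.map φ)) hf.not_isUnit
  | mul a p _ hp ih =>
    rw [map_mul] at h
    rcases (h.irreducible hf).isUnit_or_isUnit rfl with hu | hu
    · exact ih (h.trans (associated_unit_mul_left _ _ hu))
    · exact ⟨p, hp, h.trans (associated_mul_unit_left _ _ hu)⟩

theorem exists_nat_forall_toNat_add_eq {ι κ : Type*} [Finite ι] (J : Finset κ) (m : κ → ι → ℤ) :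
    ∃ N : ℕ, ∀ j ∈ J, ∀ i, ((m j i + N).toNat : ℤ) = m j i + N := by
  have := Fintype.ofFinite ι
  refine ⟨J.sup fun j => Finset.univ.sup fun i => (m j i).natAbs, fun j hj i => ?_⟩
  have natAbs_le : (m j i).natAbs ≤ J.sup fun j => Finset.univ.sup fun i => (m j i).natAbs :=
    (Finset.le_sup (f := fun i => (m j i).natAbs) (Finset.mem_univ i)).trans
      (Finset.le_sup (f := fun j => Finset.univ.sup fun i => (m j i).natAbs) hj)
  omega

theorem exists_associated_aeval_units {K R ι κ : Type*} [CommSemiring K] [CommSemiring R]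
    [Algebra K R] [Fintype ι] (u : ι → Rˣ) (J : Finset κ) (c : κ → K) (m : κ → ι → ℤ) :
    ∃ P : MvPolynomial ι K, Associated (∑ j ∈ J, c j • (↑(∏ i, u i ^ m j i) : R))
      (MvPolynomial.aeval (fun i => (u i : R)) P) := by
  obtain ⟨N, toNat_eq⟩ := exists_nat_forall_toNat_add_eq J m
  refine ⟨∑ j ∈ J, MvPolynomial.C (c j) * ∏ i, MvPolynomial.X i ^ (m j i + N).toNat,
    ∏ i, u i ^ N, ?_⟩
  simp only [map_sum, map_mul, map_prod, map_pow, MvPolynomial.aeval_X, MvPolynomial.aeval_C,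
    ← Algebra.smul_def, Finset.sum_mul, smul_mul_assoc]
  refine Finset.sum_congr rfl fun j hj => congrArg (c j • ·) ?_
  rw [← Units.val_mul, ← Finset.prod_mul_distrib, Units.coe_prod]
  refine Finset.prod_congr rfl fun i _ => ?_
  rw [← Units.val_pow_eq_pow_val, ← zpow_natCast, ← zpow_natCast _ (Int.toNat _), toNat_eq j hj,
    zpow_add]

/-- Substitution of the exponentials `z ↦ exp (β i * z)` into polynomials over `K`. -/
def expEval (K : IntermediateField ℚ ℂ) {ι : Type*} (β : ι → ℂ) :
    MvPolynomial ι K →ₐ[K] expPolyRing :=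
  MvPolynomial.aeval fun i => (expUnit 0 (.ofAdd (β i)) : expPolyRing)

variable {K : IntermediateField ℚ ℂ} {ι : Type*} {β : ι → ℂ}

theorem aeval_exp_eq_zero_of_associated {f : expPolyRing} {P : MvPolynomial ι K}
    (h : Associated f (expEval K β P)) {z : ℂ} (hz : f.1 z = 0) :
    MvPolynomial.aeval (fun i => exp (β i * z)) P = 0 := by
  obtain ⟨u, hu⟩ := h
  let ev : expPolyRing →ₐ[K] ℂ := (Pi.evalAlgHom K (fun _ => ℂ) z).comp
    (expPolyRing.val.restrictScalars K)
  have ev_eq : ev (expEval K β P) = MvPolynomial.aeval (fun i => exp (β i * z)) P := by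
    rw [expEval, MvPolynomial.comp_aeval_apply]
    refine congrArg (MvPolynomial.aeval · P) (funext fun i => ?_)
    exact (expUnit_apply 0 (β i) z).trans (by rw [sub_zero])
  have ev_f : ev f = 0 := hz
  rw [← ev_eq, ← hu, map_mul, ev_f, zero_mul]

theorem exists_associated_expEval [Finite ι] {f : expPolyRing} {I : Finset ℂ} {c : ℂ → ℂ}
    (hf : ∀ z, f.1 z = ∑ b ∈ I, c b * exp (b * z)) (hc : ∀ b ∈ I, c b ∈ K)
    (hI : (I : Set ℂ) ⊆ Submodule.span ℤ (range β)) :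
    ∃ P : MvPolynomial ι K, Associated f (expEval K β P) := by
  have := Fintype.ofFinite ι
  choose! m hm using fun b (hb : b ∈ I) => (Submodule.mem_span_range_iff_exists_fun ℤ).1 (hI hb)
  have expUnit_eq (b : I) : ∏ i, expUnit 0 (.ofAdd (β i)) ^ m b i = expUnit 0 (.ofAdd (b : ℂ)) := by
    simp_rw [← map_zpow, ← map_prod, ← ofAdd_zsmul, ← ofAdd_sum, hm b b.2]
  convert! exists_associated_aeval_units (K := K) (fun i => expUnit 0 (.ofAdd (β i))) Finset.univ
    (fun b : I => ⟨c b, hc b b.2⟩) (fun b => m b) using 3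
  ext z
  simp_rw [expUnit_eq, hf, ← Finset.sum_coe_sort I, AddSubmonoidClass.coe_finsetSum,
    Finset.sum_apply]
  refine Finset.sum_congr rfl fun b _ => ?_
  change _ = c b * (expUnit 0 (.ofAdd (b : ℂ)) : expPolyRing).1 z
  rw [expUnit_apply, sub_zero]

theorem exists_finset_subset_span_of_card_le {V : Type*} {K : Type*} [DivisionRing K]
    [AddCommGroup V] [Module K V] {S : Set V} {N : ℕ}
    (h : ∀ t : Finset V, ↑t ⊆ S → LinearIndependent K (Subtype.val : t → V) → t.card ≤ N) :
    ∃ t : Finset V, S ⊆ Submodule.span K (t : Set V) := by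
  obtain ⟨b, hbS, span_eq, indep⟩ := exists_linearIndependent K S
  have finite : b.Finite := by
    by_contra infinite
    obtain ⟨t, htb, card_eq⟩ := Set.Infinite.exists_subset_card_eq infinite (N + 1)
    have := h t (htb.trans hbS) (indep.comp _ (inclusion_injective htb))
    omega
  refine ⟨finite.toFinset, ?_⟩
  rw [finite.coe_toFinset, span_eq]
  exact Submodule.subset_span

theorem span_acl_subset_acl_union {F E : Type*} [Field F] [Field E] [Algebra F E] (Y Z : Set E) :
    (Submodule.span (acl F Y) Z : Set E) ⊆ acl F (Y ∪ Z) := by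
  have acl_le : acl F Y ≤ acl F (Y ∪ Z) := acl_mono subset_union_left
  exact Submodule.span_le (p := (IntermediateField.extendScalars acl_le).toSubalgebra.toSubmodule).2
    (subset_union_right.trans subset_acl)

theorem SchanuelConjecture.card_le_of_linearIndependent_acl (hSC : SchanuelConjecture)
    [Fintype ι] (hβ : LinearIndependent ℚ β) {C : Finset ℂ} (hβC : ∀ i, β i ∈ C) {t : Finset ℂ}
    (ht : LinearIndependent (acl ℚ (C : Set ℂ)) (Subtype.val : t → ℂ))
    (codim : ∀ z ∈ t, ∃ s : Finset ι, s.card + 2 ≤ Fintype.card ι ∧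
      ∀ i, exp (β i * z) ∈ acl ℚ (C ∪ (fun i => exp (β i * z)) '' s)) :
    t.card ≤ C.card := by
  classical
  choose! s card_s mem_acl using codim
  let βC (i : ι) : acl ℚ (C : Set ℂ) := ⟨β i, subset_acl (hβC i)⟩
  have indep_βC : LinearIndependent ℚ βC :=
    .of_comp ((Algebra.linearMap (acl ℚ (C : Set ℂ)) ℂ).restrictScalars ℚ) hβ
  let Y : Finset ℂ := C ∪ t ∪ t.biUnion fun z => (s z).image fun i => exp (β i * z)
  have card_le : Fintype.card (ι × t) ≤ Y.card := by
    refine hSC.card_le_card (linearIndependent_smul indep_βC ht) ?_ ?_ <;> rintro ⟨i, z, hz⟩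
    · refine mul_mem (subset_acl ?_) (subset_acl ?_) <;> simp [Y, βC, hβC, hz]
    · refine acl_mono (union_subset (by simp [Y]) ?_) (mem_acl z hz i)
      rintro _ ⟨j, hj, rfl⟩
      exact Finset.mem_union_right _ (Finset.mem_biUnion.2 ⟨z, hz, Finset.mem_image_of_mem _ hj⟩)
  have card_Y : Y.card ≤ C.card + t.card + ∑ z ∈ t, (s z).card :=
    (Finset.card_union_le _ _).trans <| add_le_add (Finset.card_union_le _ _) <|
      Finset.card_biUnion_le.trans <| Finset.sum_le_sum fun z _ => Finset.card_image_le
  have sum_card : ∑ z ∈ t, (s z).card + t.card * 2 ≤ t.card * Fintype.card ι := by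
    simpa [Finset.sum_add_distrib] using Finset.sum_le_sum card_s
  rw [Fintype.card_prod, Fintype.card_coe, mul_comm] at card_le
  omega

theorem SchanuelConjecture.exists_finset_commonZeros_subset_acl (hSC : SchanuelConjecture)
    {f g : expPolyRing} (hf : Irreducible f) (hfg : ¬ f ∣ g) :
    ∃ C : Finset ℂ, {z | f.1 z = 0 ∧ g.1 z = 0} ⊆ acl ℚ (C : Set ℂ) := by
  classical
  obtain ⟨I, c, hfI⟩ := f.2.exists_finset_eq_sum
  obtain ⟨J, d, hgJ⟩ := g.2.exists_finset_eq_sum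
  obtain ⟨n, β, hβ, span_eq⟩ :=
    exists_linearIndependent_span_int_eq (I.finite_toSet.union J.finite_toSet)
  have hIJ : (I ∪ J : Set ℂ) ⊆ Submodule.span ℤ (range β) := span_eq ▸ Submodule.subset_span
  rw [union_subset_iff] at hIJ
  let C : Finset ℂ := I.image c ∪ J.image d ∪ Finset.univ.image β
  have mem_acl_of_mem {x : ℂ} (hx : x ∈ C) : x ∈ acl ℚ (C : Set ℂ) := subset_acl hx
  obtain ⟨P, hP⟩ := exists_associated_expEval hfI (K := acl ℚ (C : Set ℂ))
    (fun b hb => mem_acl_of_mem (by simp [C, Finset.mem_image_of_mem c hb])) hIJ.1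
  obtain ⟨Q, hQ⟩ := exists_associated_expEval hgJ (K := acl ℚ (C : Set ℂ))
    (fun b hb => mem_acl_of_mem (by simp [C, Finset.mem_image_of_mem d hb])) hIJ.2
  obtain ⟨p, hp, hfp⟩ := exists_irreducible_associated_map
    (expEval (acl ℚ (C : Set ℂ)) β) hf hP
  have hpQ : ¬ p ∣ Q := fun h =>
    hfg ((hfp.dvd_iff_dvd_left.2 (map_dvd (expEval _ β) h)).trans hQ.symm.dvd)
  obtain ⟨t, ht⟩ := exists_finset_subset_span_of_card_le (K := acl ℚ (C : Set ℂ)) (N := C.card)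
    (S := {z | f.1 z = 0 ∧ g.1 z = 0}) fun t htS t_indep => by
      refine hSC.card_le_of_linearIndependent_acl hβ (fun i => by simp [C]) t_indep fun z hz => ?_
      exact exists_finset_card_add_two_le hp hpQ
        (aeval_exp_eq_zero_of_associated hfp (htS hz).1)
        (aeval_exp_eq_zero_of_associated hQ (htS hz).2)
  exact ⟨C ∪ t, ht.trans (Finset.coe_union C t ▸ span_acl_subset_acl_union _ _)⟩

end AlgebraicityOfCommonZeros

section MinimalVanishing

/-- The sum of `y` over `I` vanishes, but no proper nonempty subsum does. -/
def IsMinimalVanishing {κ M : Type*} [AddCommMonoid M] (I : Finset κ) (y : κ → M) : Prop :=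
  ∑ b ∈ I, y b = 0 ∧ ∀ J ⊆ I, J.Nonempty → ∑ b ∈ J, y b = 0 → J = I

variable {κ : Type*} {I : Finset κ}

theorem IsMinimalVanishing.congr {M : Type*} [AddCommMonoid M] {y y' : κ → M}
    (h : IsMinimalVanishing I y) (hy : ∀ b ∈ I, y' b = y b) : IsMinimalVanishing I y' := by
  have sum_eq {J : Finset κ} (hJ : J ⊆ I) : ∑ b ∈ J, y' b = ∑ b ∈ J, y b :=
    Finset.sum_congr rfl fun b hb => hy b (hJ hb)
  exact ⟨(sum_eq subset_rfl).trans h.1, fun J hJ hne h0 => h.2 J hJ hne ((sum_eq hJ).symm.trans h0)⟩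

theorem IsMinimalVanishing.eq_of_linearIndependent {K M τ : Type*} [Semiring K] [AddCommMonoid M]
    [Module K M] {e : τ → M} (he : LinearIndependent K e) {a : κ → K} {k : κ → τ}
    (h : IsMinimalVanishing I fun b => a b • e (k b)) : ∀ b ∈ I, ∀ b' ∈ I, k b = k b' := by
  classical
  intro b hb b' hb'
  have sum_eq_zero : ∑ j ∈ I with k j = k b', a j • e (k j) = 0 := by
    rw [Finset.sum_congr rfl fun j hj => by rw [(Finset.mem_filter.1 hj).2], ← Finset.sum_smul,
      sum_filter_eq_zero_of_linearIndependent he h.1, zero_smul]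
  have filter_eq := h.2 {j ∈ I | k j = k b'} (Finset.filter_subset _ _)
    ⟨b', Finset.mem_filter.2 ⟨hb', rfl⟩⟩ sum_eq_zero
  rw [← filter_eq] at hb
  exact (Finset.mem_filter.1 hb).2

theorem exists_infinite_isMinimalVanishing {α M : Type*} [AddCommMonoid M] {y : α → κ → M}
    (hI : I.Nonempty) {S : Set α} (hS : S.Infinite) (h : ∀ z ∈ S, ∑ b ∈ I, y z b = 0) :
    ∃ I' ⊆ I, I'.Nonempty ∧ ∃ S' ⊆ S, S'.Infinite ∧ ∀ z ∈ S', IsMinimalVanishing I' (y z) := by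
  classical
  let V (J : Finset κ) : Set α := {z ∈ S | ∑ b ∈ J, y z b = 0}
  let F : Finset (Finset κ) := {J ∈ I.powerset | J.Nonempty ∧ (V J).Infinite}
  have mem_F {J : Finset κ} : J ∈ F ↔ J ⊆ I ∧ J.Nonempty ∧ (V J).Infinite := by simp [F]
  obtain ⟨I', hI', minimal⟩ := F.exists_minimal
    ⟨I, mem_F.2 ⟨subset_rfl, hI, hS.mono fun z hz => ⟨hz, h z hz⟩⟩⟩
  obtain ⟨I'_subset, I'_nonempty, infinite⟩ := mem_F.1 hI'
  let G : Finset (Finset κ) := {J ∈ I'.powerset | J.Nonempty ∧ J ≠ I'}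
  have mem_G {J : Finset κ} : J ∈ G ↔ J ⊆ I' ∧ J.Nonempty ∧ J ≠ I' := by simp [G]
  have finite_of_mem_G : ∀ J ∈ G, (V J).Finite := by
    intro J hJ
    obtain ⟨J_subset, J_nonempty, J_ne⟩ := mem_G.1 hJ
    by_contra J_infinite
    exact J_ne (J_subset.antisymm
      (minimal (mem_F.2 ⟨J_subset.trans I'_subset, J_nonempty, J_infinite⟩) J_subset))
  refine ⟨I', I'_subset, I'_nonempty, V I' \ ⋃ J ∈ G, V J, fun z hz => hz.1.1,
    infinite.sdiff (G.finite_toSet.biUnion finite_of_mem_G),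
    fun z hz => ⟨hz.1.2, fun J hJ hne hsum => ?_⟩⟩
  by_contra J_ne
  exact hz.2 (mem_biUnion (mem_G.2 ⟨hJ, hne, J_ne⟩) ⟨hz.1.1, hsum⟩)

end MinimalVanishing

section LogSpace

theorem linearIndependent_prod_zpow {K L ι : Type*} [Field K] [Field L] [Algebra K L] [Fintype ι]
    {x : ι → L} (hx : AlgebraicIndependent K x) :
    LinearIndependent K fun m : ι → ℤ => ∏ i, x i ^ m i := by
  have indep_pow : LinearIndependent K fun e : ι →₀ ℕ => ∏ i, x i ^ e i := by
    convert! (MvPolynomial.basisMonomials ι K).linearIndependent.map'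
      (MvPolynomial.aeval x).toLinearMap (LinearMap.ker_eq_bot.2 hx) with e
    simp [MvPolynomial.aeval_monomial, Finsupp.prod_fintype]
  refine linearIndependent_iff'.2 fun s g sum_eq_zero m hm => ?_
  obtain ⟨N, toNat_eq⟩ := exists_nat_forall_toNat_add_eq s id
  let e (k : s) : ι →₀ ℕ := Finsupp.equivFunOnFinite.symm fun i => (k.1 i + N).toNat
  have e_injective : Function.Injective e := fun k l h => Subtype.ext <| funext fun i => by
    have h_toNat : (k.1 i + N).toNat = (l.1 i + N).toNat := DFunLike.congr_fun h i
    have hk := toNat_eq k k.2 i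
    have hl := toNat_eq l l.2 i
    simp only [id_eq] at hk hl
    omega
  have prod_e (k : s) : ∏ i, x i ^ e k i = (∏ i, x i ^ k.1 i) * ∏ i, x i ^ N := by
    rw [← Finset.prod_mul_distrib]
    refine Finset.prod_congr rfl fun i _ => ?_
    rw [← zpow_natCast, ← zpow_natCast, ← zpow_add₀ (hx.ne_zero i)]
    exact congrArg (x i ^ ·) (toNat_eq k k.2 i)
  refine Fintype.linearIndependent_iff.1 (indep_pow.comp e e_injective) (fun k => g k) ?_ ⟨m, hm⟩
  simp_rw [Function.comp_apply, prod_e, ← smul_mul_assoc, ← Finset.sum_mul]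
  rw [Finset.sum_coe_sort s fun k => g k • ∏ i, x i ^ k i, sum_eq_zero, zero_mul]

/-- The rational vector space of logarithms of elements of `acl ℚ Y`. -/
def logSpace (Y : Set ℂ) : Submodule ℚ ℂ where
  carrier := {v | exp v ∈ acl ℚ Y}
  add_mem' hv hw := by
    rw [mem_ofPred, exp_add]
    exact mul_mem hv hw
  zero_mem' := by
    rw [mem_ofPred, exp_zero]
    exact one_mem _
  smul_mem' q v hv := by
    refine mem_acl_of_pow_mem q.den_nz ?_
    rw [← exp_nat_mul, Rat.smul_def, ← mul_assoc,
      show (q.den * q : ℂ) = q.num from mod_cast q.den_mul_eq_num, exp_int_mul]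
    exact zpow_mem hv _

variable {κ ι : Type*} {I : Finset κ}

theorem exists_exp_mem_acl_of_isMinimalVanishing [Fintype ι] {Y : Set ℂ} {a : κ → ℂ}
    {m : κ → ι → ℤ} {w : ι → ℂ} (ha : ∀ b ∈ I, a b ∈ acl ℚ Y)
    (h : IsMinimalVanishing I fun b => a b * exp (∑ i, m b i • w i))
    {b b' : κ} (hb : b ∈ I) (hb' : b' ∈ I) (hm : m b ≠ m b') :
    ∃ i, exp (w i) ∈ acl ℚ (Y ∪ (fun i => exp (w i)) '' {i}ᶜ) := by
  refine exists_mem_acl_of_not_algebraicIndependent fun indep => hm ?_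
  choose! a' ha' using fun b (hb : b ∈ I) => (⟨⟨a b, ha b hb⟩, rfl⟩ : ∃ x : acl ℚ Y, (x : ℂ) = a b)
  refine IsMinimalVanishing.eq_of_linearIndependent (linearIndependent_prod_zpow indep) (a := a')
    ?_ b hb b' hb'
  have term_eq : ∀ b ∈ I, a' b • ∏ i, exp (w i) ^ m b i = a b * exp (∑ i, m b i • w i) := by
    intro b hb
    simp_rw [exp_sum, zsmul_eq_mul, exp_int_mul]
    exact congrArg (· * ∏ i, exp (w i) ^ m b i) (ha' b hb)
  exact h.congr term_eq

end LogSpace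

section ExpExcess

theorem exists_linearIndependent_mkQ_sub_sum_mem {E κ : Type*} [AddCommGroup E] [Module ℚ E]
    (V : Submodule ℚ E) (I : Finset κ) (d : κ → E) :
    ∃ (n : ℕ) (w : Fin n → E) (m : κ → Fin n → ℤ), LinearIndependent ℚ (V.mkQ ∘ w) ∧
      (∀ i, w i ∈ Submodule.span ℤ (d '' I)) ∧ ∀ b ∈ I, d b - ∑ i, m b i • w i ∈ V := by
  let π : E →ₗ[ℤ] E ⧸ V := V.mkQ.restrictScalars ℤ
  obtain ⟨n, β, hβ, span_β⟩ :=
    exists_linearIndependent_span_int_eq ((I.finite_toSet.image d).image π)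
  have exists_lift (i) : ∃ x ∈ Submodule.span ℤ (d '' I), π x = β i := by
    rw [← Submodule.mem_map, Submodule.map_span, ← span_β]
    exact Submodule.subset_span (mem_range_self i)
  choose w w_mem hw using exists_lift
  have exists_coeff : ∀ b ∈ I, ∃ m : Fin n → ℤ, ∑ i, m i • β i = π (d b) := fun b hb => by
    rw [← Submodule.mem_span_range_iff_exists_fun, span_β]
    exact Submodule.subset_span (mem_image_of_mem π (mem_image_of_mem d hb))
  choose! m hm using exists_coeff
  refine ⟨n, w, m, ?_, w_mem, fun b hb => ?_⟩
  · convert! hβ using 1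
    exact funext hw
  · have π_eq_zero : π (d b - ∑ i, m b i • w i) = 0 := by
      simp only [map_sub, map_sum, map_zsmul, hw, hm b hb, sub_self]
    exact (Submodule.Quotient.mk_eq_zero V).1 π_eq_zero

/-- `V` is a finite-dimensional rational subspace of `acl ℚ C` whose dimension exceeds by `k` the
number of parameters needed, on top of `C`, to generate its exponentials algebraically. -/
structure HasExpExcess (C : Set ℂ) (k : ℕ) (V : Submodule ℚ ℂ) : Prop where
  finiteDimensional : FiniteDimensional ℚ V
  mem_acl : ∀ v ∈ V, v ∈ acl ℚ C
  exists_le_logSpace : ∃ Y : Finset ℂ, V ≤ logSpace (C ∪ Y) ∧ Y.card + k ≤ Module.finrank ℚ V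

theorem SchanuelConjecture.le_card_of_hasExpExcess (hSC : SchanuelConjecture) {C : Finset ℂ} {k : ℕ}
    {V : Submodule ℚ ℂ} (hV : HasExpExcess C k V) : k ≤ C.card := by
  classical
  have := hV.finiteDimensional
  obtain ⟨Y, V_le, card_le⟩ := hV.exists_le_logSpace
  let B := Module.finBasis ℚ V
  have finrank_le := hSC.card_le_card (Y := C ∪ Y)
    (B.linearIndependent.map' V.subtype V.ker_subtype)
    (fun i => acl_mono (by simp) (hV.mem_acl _ (B i).2))
    fun i => by
      rw [Finset.coe_union]
      exact V_le (B i).2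
  rw [Fintype.card_fin] at finrank_le
  have := Finset.card_union_le C Y
  omega

variable {κ : Type*} {I : Finset κ} {C : Set ℂ} {k : ℕ} {V : Submodule ℚ ℂ}

theorem HasExpExcess.sup_span {n : ℕ} {w : Fin n → ℂ} (hV : HasExpExcess C k V)
    (hw : LinearIndependent ℚ (V.mkQ ∘ w)) (w_mem : ∀ i, w i ∈ acl ℚ C)
    (exp_mem : ∀ Y : Set ℂ, V ≤ logSpace (C ∪ Y) →
      ∃ i, exp (w i) ∈ acl ℚ (C ∪ Y ∪ (fun i => exp (w i)) '' {i}ᶜ)) :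
    HasExpExcess C (k + 1) (V ⊔ Submodule.span ℚ (range w)) := by
  classical
  have := hV.finiteDimensional
  have := FiniteDimensional.span_of_finite ℚ (finite_range w)
  have finrank_sup :
      Module.finrank ℚ ↥(V ⊔ Submodule.span ℚ (range w)) = Module.finrank ℚ V + n := by
    have disjoint := Submodule.range_ker_disjoint hw
    rw [Submodule.ker_mkQ] at disjoint
    have := Submodule.finrank_sup_add_finrank_inf_eq V (Submodule.span ℚ (range w))
    rwa [disjoint.symm.eq_bot, finrank_bot, add_zero,
      finrank_span_eq_card hw.of_comp, Fintype.card_fin] at this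
  refine ⟨inferInstance, ?_, ?_⟩
  · change V ⊔ Submodule.span ℚ (range w) ≤ Subalgebra.toSubmodule (acl ℚ C).toSubalgebra
    exact sup_le hV.mem_acl (Submodule.span_le.2 (range_subset_iff.2 w_mem))
  obtain ⟨Y, V_le, card_le⟩ := hV.exists_le_logSpace
  obtain ⟨i, hi⟩ := exp_mem Y V_le
  let Y' : Finset ℂ := Y ∪ (Finset.univ.erase i).image fun i => exp (w i)
  have union_eq : C ∪ Y ∪ (fun i => exp (w i)) '' {i}ᶜ = C ∪ Y' := by
    simp [Y', union_assoc, compl_eq_univ_sdiff]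
  rw [union_eq] at hi
  refine ⟨Y', sup_le ?_ (Submodule.span_le.2 (range_subset_iff.2 fun j => ?_)), ?_⟩
  · exact fun v hv => acl_mono (union_subset_union_right C (by simp [Y'])) (V_le hv)
  · obtain rfl | hj := eq_or_ne j i
    · exact hi
    · exact subset_acl (union_eq ▸ Or.inr ⟨j, hj, rfl⟩)
  · have card_Y' : Y'.card ≤ Y.card + (n - 1) := (Finset.card_union_le _ _).trans <| by
      grw [Finset.card_image_le, Finset.card_erase_of_mem (Finset.mem_univ i), Finset.card_fin]
    have := i.pos
    omega

theorem HasExpExcess.exists_succ {c d : κ → ℂ} (hV : HasExpExcess C k V)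
    (hc : ∀ b ∈ I, c b ∈ acl ℚ C) (hd : ∀ b ∈ I, d b ∈ acl ℚ C)
    (hmin : IsMinimalVanishing I fun b => c b * exp (d b)) {b b' : κ} (hb : b ∈ I) (hb' : b' ∈ I)
    (hbb' : d b - d b' ∉ V) : ∃ V', HasExpExcess C (k + 1) V' := by
  obtain ⟨n, w, m, hw, w_mem, sub_mem⟩ := exists_linearIndependent_mkQ_sub_sum_mem V I d
  have m_ne : m b ≠ m b' := fun h => hbb' <| by
    simpa [h] using V.sub_mem (sub_mem b hb) (sub_mem b' hb')
  have span_le : Submodule.span ℤ (d '' I) ≤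
      (Subalgebra.toSubmodule (acl ℚ C).toSubalgebra).restrictScalars ℤ :=
    Submodule.span_le.2 (image_subset_iff.2 hd)
  refine ⟨_, hV.sup_span hw (fun i => span_le (w_mem i)) fun Y V_le => ?_⟩
  refine exists_exp_mem_acl_of_isMinimalVanishing
    (a := fun b => c b * exp (d b - ∑ i, m b i • w i)) (fun b hb => ?_)
    (hmin.congr fun b _ => ?_) hb hb' m_ne
  · exact mul_mem (acl_mono subset_union_left (hc b hb)) (V_le (sub_mem b hb))
  · rw [mul_assoc, ← exp_add, sub_add_cancel]

theorem SchanuelConjecture.exists_finiteDimensional_forall_sub_mem (hSC : SchanuelConjecture)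
    {α : Type*} {C : Finset ℂ} {S : Set α} {c : κ → ℂ} {d : α → κ → ℂ}
    (hc : ∀ b ∈ I, c b ∈ acl ℚ (C : Set ℂ)) (hd : ∀ z ∈ S, ∀ b ∈ I, d z b ∈ acl ℚ (C : Set ℂ))
    (hmin : ∀ z ∈ S, IsMinimalVanishing I fun b => c b * exp (d z b)) :
    ∃ V : Submodule ℚ ℂ, FiniteDimensional ℚ V ∧
      ∀ z ∈ S, ∀ b ∈ I, ∀ b' ∈ I, d z b - d z b' ∈ V := by
  by_contra! hcon
  have exists_hasExpExcess (k : ℕ) : ∃ V, HasExpExcess C k V := by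
    induction k with
    | zero => exact ⟨⊥, inferInstance, by simp, ∅, bot_le, by simp⟩
    | succ k ih =>
      obtain ⟨V, hV⟩ := ih
      obtain ⟨z, hz, b, hb, b', hb', sub_notMem⟩ := hcon V hV.finiteDimensional
      exact hV.exists_succ hc (hd z hz) (hmin z hz) hb hb' sub_notMem
  obtain ⟨V, hV⟩ := exists_hasExpExcess (C.card + 1)
  exact (hSC.le_card_of_hasExpExcess hV).not_gt C.card.lt_succ_self

end ExpExcess

section FourExponentials

theorem SchanuelConjecture.notMem_acl (hSC : SchanuelConjecture) {W : Submodule ℚ ℂ}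
    [FiniteDimensional ℚ W] (hW : W ≤ logSpace ∅) {x : ℂ} (hx : x ∈ logSpace ∅) (hxW : x ∉ W) :
    x ∉ acl ℚ (W : Set ℂ) := by
  classical
  intro x_mem
  let B := Module.finBasis ℚ W
  let Y : Finset ℂ := Finset.univ.image fun i => (B i : ℂ)
  have span_B : Submodule.span ℚ (range fun i => (B i : ℂ)) = W := by
    have map_span := congrArg (Submodule.map W.subtype) B.span_eq
    rwa [Submodule.map_span, Submodule.map_top, Submodule.range_subtype, ← range_comp] at map_span
  have W_subset : (W : Set ℂ) ⊆ acl ℚ (Y : Set ℂ) := by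
    have span_subset := Submodule.span_le_restrictScalars ℚ (acl ℚ (∅ : Set ℂ))
      (range fun i => (B i : ℂ))
    rw [span_B] at span_subset
    refine fun v hv => acl_mono ?_ (span_acl_subset_acl_union ∅ _ (span_subset hv))
    simp [Y]
  have exp_mem {v : ℂ} (hv : v ∈ logSpace ∅) : exp v ∈ acl ℚ (Y : Set ℂ) :=
    acl_mono (empty_subset _) hv
  have card_le := hSC.card_le_card (Y := Y)
    ((B.linearIndependent.map' W.subtype W.ker_subtype).option (by rwa [← span_B] at hxW))
    (fun o => o.rec (acl_le_acl W_subset x_mem) fun i => W_subset (B i).2)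
    (fun o => o.rec (exp_mem hx) fun i => exp_mem (hW (B i).2))
  have card_Y_le : Y.card ≤ Module.finrank ℚ W := Finset.card_image_le.trans (by simp)
  rw [Fintype.card_option, Fintype.card_fin] at card_le
  omega

theorem eq_zero_of_transcendental_of_quadratic {K L : Type*} [Field K] [Field L] [Algebra K L]
    {t : L} (ht : Transcendental K t) {a b c : K}
    (h : algebraMap K L a * t ^ 2 + algebraMap K L b * t + algebraMap K L c = 0) : c = 0 := by
  have quadratic_eq_zero := transcendental_iff.1 ht
    (.C a * .X ^ 2 + .C b * .X + .C c) (by simpa using h)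
  simpa using congrArg (Polynomial.coeff · 0) quadratic_eq_zero

theorem exists_rat_smul_add_mem_inf_ker {E : Type*} [AddCommGroup E] [Module ℚ E]
    {V : Submodule ℚ E} {φ : E →ₗ[ℚ] ℚ} {x v : E} (hx : x ∈ V) (hφ : φ x ≠ 0) (hv : v ∈ V) :
    ∃ a : ℚ, ∃ r ∈ V ⊓ LinearMap.ker φ, v = a • x + r := by
  refine ⟨φ v / φ x, v - (φ v / φ x) • x, ⟨V.sub_mem hv (V.smul_mem _ hx), ?_⟩, by abel⟩
  simp [hφ]

theorem mem_span_singleton_of_mul_mem_span_singleton_mul {b w w' : ℂ} (hb : b ≠ 0) (hw : w ≠ 0)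
    (h : b * w ∈ Submodule.span ℚ {b * w'}) : w' ∈ Submodule.span ℚ {w} := by
  obtain ⟨q, hq⟩ := Submodule.mem_span_singleton.1 h
  rw [← mul_smul_comm] at hq
  have w_eq := mul_left_cancel₀ hb hq
  refine Submodule.mem_span_singleton.2 ⟨q⁻¹, ?_⟩
  rw [← w_eq, inv_smul_smul₀]
  rintro rfl
  exact hw (by rw [← w_eq, zero_smul])

theorem SchanuelConjecture.mem_span_singleton_or_mem_span_singleton (hSC : SchanuelConjecture)
    {b b' w w' : ℂ} (hb : b ≠ 0) (hw : w ≠ 0) (hbw : b * w ∈ logSpace ∅)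
    (hbw' : b * w' ∈ logSpace ∅) (hb'w : b' * w ∈ logSpace ∅) (hb'w' : b' * w' ∈ logSpace ∅) :
    b' ∈ Submodule.span ℚ {b} ∨ w' ∈ Submodule.span ℚ {w} := by
  by_contra! ⟨hb', hw'⟩
  have w'_ne_zero : w' ≠ 0 := ne_of_mem_of_not_mem (zero_mem _) hw' |>.symm
  let V : Submodule ℚ ℂ := Submodule.span ℚ {b * w, b * w', b' * w, b' * w'}
  have V_le : V ≤ logSpace ∅ := Submodule.span_le.2 (by simp [insert_subset_iff, *])
  have : FiniteDimensional ℚ V := FiniteDimensional.span_of_finite ℚ (by simp)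
  have notMem_span : b * w ∉ Submodule.span ℚ {b * w'} := fun h =>
    hw' (mem_span_singleton_of_mul_mem_span_singleton_mul hb hw h)
  obtain ⟨φ, hφ, hφ'⟩ := Submodule.exists_le_ker_of_notMem notMem_span
  have bw_mem : b * w ∈ V := Submodule.subset_span (by simp)
  let W := V ⊓ LinearMap.ker φ
  obtain ⟨a, r, hr, eq_r⟩ := exists_rat_smul_add_mem_inf_ker (v := b' * w) bw_mem hφ
    (Submodule.subset_span (by simp))
  obtain ⟨a', r', hr', eq_r'⟩ := exists_rat_smul_add_mem_inf_ker (v := b' * w') bw_mem hφ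
    (Submodule.subset_span (by simp))
  have bw'_mem : b * w' ∈ W :=
    ⟨Submodule.subset_span (by simp), hφ' (Submodule.mem_span_singleton_self _)⟩
  have transcendental_bw : Transcendental (acl ℚ (W : Set ℂ)) (b * w) := fun h =>
    hSC.notMem_acl (inf_le_left.trans V_le) hbw (fun h => hφ h.2) (mem_acl_of_isAlgebraic_acl h)
  let r₀ : acl ℚ (W : Set ℂ) := ⟨r, subset_acl hr⟩
  let r₁ : acl ℚ (W : Set ℂ) := ⟨r', subset_acl hr'⟩
  let y : acl ℚ (W : Set ℂ) := ⟨b * w', subset_acl bw'_mem⟩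
  -- `(b * w) * (b' * w') = (b' * w) * (b * w')` is a quadratic equation for `b * w` over `acl ℚ W`.
  have mul_eq_zero : -(r₀ * y) = 0 := by
    refine eq_zero_of_transcendental_of_quadratic transcendental_bw
      (a := (a' : acl ℚ (W : Set ℂ))) (b := r₁ - a * y) ?_
    have quadratic : a' * (b * w) ^ 2 + (r' - a * (b * w')) * (b * w) + -(r * (b * w')) = 0 := by
      rw [Rat.smul_def] at eq_r eq_r'
      linear_combination (b * w') * eq_r - (b * w) * eq_r'
    exact_mod_cast quadratic
  have mul_eq_zero' : r * (b * w') = 0 := congrArg Subtype.val (neg_eq_zero.1 mul_eq_zero)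
  have r_eq_zero : r = 0 :=
    (mul_eq_zero_iff_right (mul_ne_zero hb w'_ne_zero)).1 mul_eq_zero'
  refine hb' (Submodule.mem_span_singleton.2 ⟨a, mul_right_cancel₀ hw ?_⟩)
  rw [smul_mul_assoc, eq_r, r_eq_zero, add_zero]

end FourExponentials

section LogDerivative

variable {K L ι : Type*} [Field K] [Field L] [Algebra K L] (D : Derivation K L L)

/-- A linear relation `∑ i ∈ Z, a i * y i = 0` with coefficients in `N` between nonzero elements
whose logarithmic derivatives lie in `E`. -/
structure IsLogDerivRelation (N E : Submodule K L) (Z : Finset ι) (a y : ι → L) : Prop where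
  ne_zero : ∀ i ∈ Z, y i ≠ 0
  logDeriv_mem : ∀ i ∈ Z, D (y i) / y i ∈ E
  coeff_mem : ∀ i ∈ Z, a i ∈ N
  sum_eq_zero : ∑ i ∈ Z, a i * y i = 0

/-- The Wronskian of `a l * y l` and `a i * y i`, divided by `y i * y l`. -/
def wronskianCoeff (a y : ι → L) (l i : ι) : L :=
  a l * D (a i) - D (a l) * a i + a i * a l * (D (y i) / y i - D (y l) / y l)

variable {D} {a y : ι → L} {l : ι}

theorem wronskianCoeff_mul {i : ι} (hi : y i ≠ 0) (hl : y l ≠ 0) :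
    wronskianCoeff D a y l i * y i * y l =
      a l * y l * D (a i * y i) - D (a l * y l) * (a i * y i) := by
  simp only [wronskianCoeff, Derivation.leibniz, smul_eq_mul]
  field

variable {N E : Submodule K L} {Z : Finset ι}

theorem IsLogDerivRelation.wronskian [DecidableEq ι] (h : IsLogDerivRelation D N E Z a y)
    (hl : l ∈ Z) :
    IsLogDerivRelation D (N * N.map D.toLinearMap ⊔ N * N * E) E (Z.erase l)
      (wronskianCoeff D a y l) y where
  ne_zero i hi := h.ne_zero i (Finset.mem_of_mem_erase hi)
  logDeriv_mem i hi := h.logDeriv_mem i (Finset.mem_of_mem_erase hi)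
  coeff_mem i hi := by
    have hi' := Finset.mem_of_mem_erase hi
    have mul_map_mem {j j' : ι} (hj : j ∈ Z) (hj' : j' ∈ Z) :
        a j * D (a j') ∈ N * N.map D.toLinearMap ⊔ N * N * E :=
      Submodule.mem_sup_left (Submodule.mul_mem_mul (h.coeff_mem j hj)
        (Submodule.mem_map_of_mem (h.coeff_mem j' hj')))
    refine add_mem (sub_mem (mul_map_mem hl hi') ?_) (Submodule.mem_sup_right ?_)
    · rw [mul_comm (D (a l))]
      exact mul_map_mem hi' hl
    · exact Submodule.mul_mem_mul (Submodule.mul_mem_mul (h.coeff_mem i hi') (h.coeff_mem l hl))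
        (sub_mem (h.logDeriv_mem i hi') (h.logDeriv_mem l hl))
  sum_eq_zero := by
    refine (mul_eq_zero_iff_right (h.ne_zero l hl)).1 ?_
    have coeff_self : wronskianCoeff D a y l l = 0 := by
      rw [wronskianCoeff]
      ring
    rw [Finset.sum_erase _ (by rw [coeff_self, zero_mul]), Finset.sum_mul,
      Finset.sum_congr rfl fun i hi => wronskianCoeff_mul (h.ne_zero i hi) (h.ne_zero l hl),
      Finset.sum_sub_distrib, ← Finset.mul_sum, ← Finset.mul_sum, ← map_sum, h.sum_eq_zero,
      map_zero, mul_zero, mul_zero, sub_zero]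

theorem exists_eq_smul_of_wronskian_eq_zero
    (hD : ∀ x, D x = 0 → x ∈ range (algebraMap K L)) {u v : L} (hv : v ≠ 0)
    (h : v * D u - D v * u = 0) : ∃ c : K, u = c • v := by
  obtain ⟨c, hc⟩ := hD (u / v) (by
    rw [Derivation.leibniz_div, smul_eq_mul u, mul_comm u, smul_eq_mul v, h, smul_zero])
  exact ⟨c, by rw [Algebra.smul_def, hc, div_mul_cancel₀ _ hv]⟩

theorem exists_fg_forall_exists_mul_eq_mul
    (hD : ∀ x, D x = 0 → x ∈ range (algebraMap K L)) (n : ℕ) (hN : N.FG) (hE : E.FG) :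
    ∃ M : Submodule K L, M.FG ∧ ∀ (Z : Finset ι) (a y : ι → L), Z.card ≤ n →
      IsLogDerivRelation D N E Z a y → (∃ i ∈ Z, a i ≠ 0) →
      ∃ k ∈ Z, ∃ l ∈ Z, k ≠ l ∧ ∃ r ∈ M, ∃ r' ∈ M, r ≠ 0 ∧ r' ≠ 0 ∧ r * y k = r' * y l := by
  classical
  induction n generalizing N with
  | zero =>
    refine ⟨N, hN, fun Z a y card_le _ ⟨i, hi, _⟩ => ?_⟩
    rw [Finset.card_eq_zero.1 (Nat.le_zero.1 card_le)] at hi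
    exact absurd hi (Finset.notMem_empty i)
  | succ n ih =>
    obtain ⟨M, hM, exists_pair⟩ := ih ((hN.mul (hN.map D.toLinearMap)).sup ((hN.mul hN).mul hE))
    refine ⟨M ⊔ N, hM.sup hN, fun Z a y card_le h ⟨l, hl, a_l_ne_zero⟩ => ?_⟩
    by_cases exists_ne : ∃ i ∈ Z.erase l, wronskianCoeff D a y l i ≠ 0
    · obtain ⟨k, hk, k', hk', hne, r, hr, r', hr', hrr'⟩ := exists_pair _ _ y
        (by rw [Finset.card_erase_of_mem hl]; omega) (h.wronskian hl) exists_ne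
      exact ⟨k, Finset.mem_of_mem_erase hk, k', Finset.mem_of_mem_erase hk', hne,
        r, Submodule.mem_sup_left hr, r', Submodule.mem_sup_left hr', hrr'⟩
    · push Not at exists_ne
      have l_term_ne_zero : a l * y l ≠ 0 := mul_ne_zero a_l_ne_zero (h.ne_zero l hl)
      obtain ⟨k, hk, k_term_ne_zero⟩ : ∃ k ∈ Z.erase l, a k * y k ≠ 0 := by
        refine Finset.exists_ne_zero_of_sum_ne_zero fun sum_eq_zero => l_term_ne_zero ?_
        rw [← h.sum_eq_zero, ← Finset.add_sum_erase Z _ hl, sum_eq_zero, add_zero]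
      obtain ⟨k_ne_l, hkZ⟩ := Finset.mem_erase.1 hk
      obtain ⟨c, hc⟩ := exists_eq_smul_of_wronskian_eq_zero hD (u := a k * y k) l_term_ne_zero (by
        rw [← wronskianCoeff_mul (h.ne_zero k hkZ) (h.ne_zero l hl), exists_ne k hk, zero_mul,
          zero_mul])
      have c_ne_zero : c ≠ 0 := by
        rintro rfl
        exact k_term_ne_zero (hc.trans (zero_smul K _))
      exact ⟨k, hkZ, l, hl, k_ne_l, a k, Submodule.mem_sup_right (h.coeff_mem k hkZ), c • a l,
        Submodule.mem_sup_right (N.smul_mem c (h.coeff_mem l hl)),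
        left_ne_zero_of_mul k_term_ne_zero, smul_ne_zero c_ne_zero a_l_ne_zero,
        by rw [hc, smul_mul_assoc]⟩

theorem sum_erase_merge [DecidableEq ι] {r r' : L} {k : ι} {J : Finset ι} (hkl : k ≠ l)
    (hr : r * y k = r' * y l) (hJ : k ∈ J ↔ l ∈ J) :
    ∑ i ∈ J.erase k, (a i * r + if i = l then a k * r' else 0) * y i =
      r * ∑ i ∈ J, a i * y i := by
  have sum_erase_eq : ∑ i ∈ J.erase k, a i * y i + (if k ∈ J then a k * y k else 0) =
      ∑ i ∈ J, a i * y i := by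
    split_ifs with hk
    · exact Finset.sum_erase_add _ _ hk
    · rw [add_zero, Finset.erase_eq_of_notMem hk]
  have l_mem_erase : l ∈ J.erase k ↔ k ∈ J := by rw [Finset.mem_erase, hJ, and_iff_right hkl.symm]
  simp only [add_mul, ite_mul, zero_mul, Finset.sum_add_distrib, Finset.sum_ite_eq', l_mem_erase,
    ← sum_erase_eq, mul_add, Finset.mul_sum]
  congr 1
  · exact Finset.sum_congr rfl fun i _ => by ring
  · split_ifs
    · linear_combination (-a k) * hr
    · rw [mul_zero]

theorem IsLogDerivRelation.merge [DecidableEq ι] {M : Submodule K L}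
    (h : IsLogDerivRelation D N E Z a y)
    {r r' : L} {k : ι} (hk : k ∈ Z) (hl : l ∈ Z) (hkl : k ≠ l) (hr : r ∈ M) (hr' : r' ∈ M)
    (hrr' : r * y k = r' * y l) :
    IsLogDerivRelation D (N * M) E (Z.erase k)
      (fun i => a i * r + if i = l then a k * r' else 0) y where
  ne_zero i hi := h.ne_zero i (Finset.mem_of_mem_erase hi)
  logDeriv_mem i hi := h.logDeriv_mem i (Finset.mem_of_mem_erase hi)
  coeff_mem i hi := by
    refine add_mem (Submodule.mul_mem_mul (h.coeff_mem i (Finset.mem_of_mem_erase hi)) hr) ?_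
    split_ifs
    exacts [Submodule.mul_mem_mul (h.coeff_mem k hk) hr', zero_mem _]
  sum_eq_zero := by
    rw [sum_erase_merge hkl hrr' (iff_of_true hk hl), h.sum_eq_zero, mul_zero]

theorem exists_fg_forall_exists_separated_mul_eq_mul [DecidableEq ι]
    (hD : ∀ x, D x = 0 → x ∈ range (algebraMap K L)) (n : ℕ) (hN : N.FG) (hE : E.FG) :
    ∃ M : Submodule K L, M.FG ∧ ∀ (Z J : Finset ι) (a y : ι → L), Z.card ≤ n → J ⊆ Z →
      IsLogDerivRelation D N E Z a y → ∑ i ∈ J, a i * y i ≠ 0 →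
      ∃ k ∈ J, ∃ l ∈ Z \ J, ∃ r ∈ M, ∃ r' ∈ M, r ≠ 0 ∧ r' ≠ 0 ∧ r * y k = r' * y l := by
  induction n generalizing N with
  | zero =>
    refine ⟨N, hN, fun Z J a y card_le hJ _ hne => absurd ?_ hne⟩
    rw [Finset.card_eq_zero.1 (Nat.le_zero.1 card_le), Finset.subset_empty] at hJ
    rw [hJ, Finset.sum_empty]
  | succ n ih =>
    obtain ⟨M₁, hM₁, exists_pair⟩ := exists_fg_forall_exists_mul_eq_mul (ι := ι) hD (n + 1) hN hE
    obtain ⟨M₂, hM₂, exists_separated⟩ := ih (hN.mul hM₁)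
    refine ⟨M₁ ⊔ M₂, hM₁.sup hM₂, fun Z J a y card_le hJ h hne => ?_⟩
    obtain ⟨i, hi, term_ne_zero⟩ := Finset.exists_ne_zero_of_sum_ne_zero hne
    obtain ⟨k, hk, l, hl, hkl, r, hr, r', hr', r_ne_zero, r'_ne_zero, hrr'⟩ :=
      exists_pair Z a y card_le h ⟨i, hJ hi, left_ne_zero_of_mul term_ne_zero⟩
    by_cases hiff : k ∈ J ↔ l ∈ J
    · obtain ⟨k', hk', l', hl', s, hs, s', hs', hss'⟩ :=
        exists_separated (Z.erase k) (J.erase k) _ y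
        (by rw [Finset.card_erase_of_mem hk]; omega) (Finset.erase_subset_erase k hJ)
        (h.merge hk hl hkl hr hr' hrr')
        (by rw [sum_erase_merge hkl hrr' hiff]; exact mul_ne_zero r_ne_zero hne)
      rw [← Finset.erase_sdiff_distrib] at hl'
      exact ⟨k', Finset.mem_of_mem_erase hk', l', Finset.mem_of_mem_erase hl', s,
        Submodule.mem_sup_right hs, s', Submodule.mem_sup_right hs', hss'⟩
    · by_cases hkJ : k ∈ J
      · have hlJ : l ∈ Z \ J := Finset.mem_sdiff.2 ⟨hl, fun h => hiff (iff_of_true hkJ h)⟩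
        exact ⟨k, hkJ, l, hlJ, r, Submodule.mem_sup_left hr, r', Submodule.mem_sup_left hr',
          r_ne_zero, r'_ne_zero, hrr'⟩
      · have hlJ : l ∈ J := by
          by_contra h
          exact hiff (iff_of_false hkJ h)
        exact ⟨l, hlJ, k, Finset.mem_sdiff.2 ⟨hk, hkJ⟩, r', Submodule.mem_sup_left hr', r,
          Submodule.mem_sup_left hr, r'_ne_zero, r_ne_zero, hrr'.symm⟩

end LogDerivative

section Valuation

variable {F E Γ₀ : Type*} [Field F] [Field E] [Algebra F E] [LinearOrderedCommGroupWithZero Γ₀]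

theorem finite_image_valuation_span_insert {v : Valuation E Γ₀}
    (hv : ∀ c : F, c ≠ 0 → v (algebraMap F E c) = 1) {M : Submodule F E}
    (hM : (v '' (M : Set E)).Finite) (x : E) :
    (v '' (Submodule.span F {x} ⊔ M : Submodule F E)).Finite := by
  have valuation_mem {m m' : E} (hm : m ∈ M) (hm' : m' ∈ M) (hlt : v (x + m) < v (x + m')) :
      v (x + m') ∈ v '' (M : Set E) := by
    refine ⟨m - m', M.sub_mem hm hm', ?_⟩
    rw [← Valuation.map_sub_eq_of_lt_right _ hlt, add_sub_add_left_eq_sub]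
  have subsingleton : ((fun m => v (x + m)) '' M \ v '' (M : Set E)).Subsingleton := by
    rintro _ ⟨⟨m, hm, rfl⟩, notMem⟩ _ ⟨⟨m', hm', rfl⟩, notMem'⟩
    exact le_antisymm (not_lt.1 fun h => notMem (valuation_mem hm' hm h))
      (not_lt.1 fun h => notMem' (valuation_mem hm hm' h))
  refine (hM.union subsingleton.finite).subset ?_
  rw [union_sdiff_self]
  rintro _ ⟨_, hu, rfl⟩
  obtain ⟨_, hcx, m, hm, rfl⟩ := Submodule.mem_sup.1 hu
  obtain ⟨c, rfl⟩ := Submodule.mem_span_singleton.1 hcx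
  rcases eq_or_ne c 0 with rfl | hc
  · exact .inl ⟨m, hm, by rw [zero_smul, zero_add]⟩
  · refine .inr ⟨c⁻¹ • m, M.smul_mem _ hm, ?_⟩
    have smul_eq : c • x + m = algebraMap F E c * (x + c⁻¹ • m) := by
      rw [← Algebra.smul_def, smul_add, smul_inv_smul₀ hc]
    rw [smul_eq, map_mul, hv c hc, one_mul]

theorem finite_image_valuation_of_fg {v : Valuation E Γ₀}
    (hv : ∀ c : F, c ≠ 0 → v (algebraMap F E c) = 1) {M : Submodule F E} (hM : M.FG) :
    (v '' (M : Set E)).Finite := by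
  classical
  obtain ⟨s, rfl⟩ := hM
  induction s using Finset.induction_on with
  | empty => simp
  | insert x s _ ih =>
    rw [Finset.coe_insert, Submodule.span_insert]
    exact finite_image_valuation_span_insert hv ih x

/-- The field of constants of a derivation. -/
def constantField (D : Derivation F E E) : IntermediateField F E where
  carrier := {x | D x = 0}
  mul_mem' {x y} (hx : D x = 0) (hy : D y = 0) := by
    rw [mem_ofPred, Derivation.leibniz, hx, hy, smul_zero, smul_zero, add_zero]
  add_mem' {x y} (hx : D x = 0) (hy : D y = 0) := by rw [mem_ofPred, map_add, hx, hy, add_zero]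
  algebraMap_mem' := D.map_algebraMap
  inv_mem' x (hx : D x = 0) := by
    rw [mem_ofPred, Derivation.leibniz_inv, hx, smul_zero]

/-- A derivation, seen as linear over its field of constants. -/
def constantFieldDerivation (D : Derivation F E E) : Derivation (constantField D) E E :=
  .mk'
    { toFun := D
      map_add' := map_add D
      map_smul' := fun c x => by
        have hc : D c = 0 := c.2
        simp [Algebra.smul_def, hc] }
    D.leibniz

theorem mem_constantField_of_isIntegral [CharZero F] (D : Derivation F E E) {x : E}
    (hx : IsIntegral (constantField D) x) : x ∈ constantField D := by
  have : CharZero (constantField D) := charZero_of_injective_algebraMap (algebraMap F _).injective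
  have map_aeval := (constantFieldDerivation D).map_aeval (minpoly (constantField D) x) x
  rw [minpoly.aeval, map_zero] at map_aeval
  exact (smul_eq_zero.1 map_aeval.symm).resolve_left
    ((minpoly.irreducible hx).separable.aeval_derivative_ne_zero (minpoly.aeval _ x))

theorem exists_constantField_valuationSubring [CharZero F] {t : E} (ht : Transcendental F t) :
    ∃ (D : Derivation F E E) (O : ValuationSubring E), t ∉ O ∧
      ∀ c : constantField D, c ≠ 0 → O.valuation (algebraMap _ E c) = 1 := by
  obtain ⟨D, hD⟩ := exists_derivation_apply_ne_zero ht
  let R : Subring E := (constantField D).toSubring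
  have : IsIntegrallyClosedIn R E := isIntegrallyClosedIn_iff.2 ⟨Subtype.val_injective,
    fun {x} hx => ⟨⟨x, mem_constantField_of_isIntegral D hx⟩, rfl⟩⟩
  obtain ⟨O, R_le, t_notMem⟩ :=
    Subring.exists_le_valuationSubring_of_isIntegrallyClosedIn (R := R) (x := t) hD
  have valuation_le (c : constantField D) : O.valuation (algebraMap _ E c) ≤ 1 :=
    (O.valuation_le_one_iff _).2 (R_le c.2)
  refine ⟨D, O, t_notMem, fun c hc => le_antisymm (valuation_le c) ?_⟩
  have valuation_inv_le := valuation_le c⁻¹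
  rwa [map_inv₀, map_inv₀, inv_le_one₀ (by simpa [zero_lt_iff] using hc)] at valuation_inv_le

end Valuation

section AlgebraicDifferences

theorem exists_infinite_subset_forall {α β : Type*} {S : Set α} (hS : S.Infinite) {F : Set β}
    (hF : F.Finite) {P : α → β → Prop} (h : ∀ a ∈ S, ∃ b ∈ F, P a b) :
    ∃ b ∈ F, ∃ S' ⊆ S, S'.Infinite ∧ ∀ a ∈ S', P a b := by
  by_contra! exists_not
  have finite_fiber : ∀ b ∈ F, {a ∈ S | P a b}.Finite := fun b hb => by
    by_contra infinite
    obtain ⟨a, ha, not_P⟩ := exists_not b hb {a ∈ S | P a b} (sep_subset _ _) infinite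
    exact not_P ha.2
  refine hS ((hF.biUnion finite_fiber).subset fun a ha => ?_)
  obtain ⟨b, hb, hab⟩ := h a ha
  exact mem_biUnion hb ⟨ha, hab⟩

/-- The rational vector space of logarithms of units of a valuation ring. -/
def valuationLogSpace (O : ValuationSubring ℂ) : Submodule ℚ ℂ where
  carrier := {v | O.valuation (exp v) = 1}
  add_mem' {v w} (hv : O.valuation (exp v) = 1) (hw : O.valuation (exp w) = 1) := by
    rw [mem_ofPred, exp_add, map_mul, hv, hw, one_mul]
  zero_mem' := by rw [mem_ofPred, exp_zero, map_one]
  smul_mem' q v (hv : O.valuation (exp v) = 1) := by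
    have pow_eq : exp (q • v) ^ q.den = exp v ^ q.num := by
      rw [← exp_nat_mul, ← exp_int_mul, Rat.smul_def, ← mul_assoc,
        show (q.den * q : ℂ) = q.num from mod_cast q.den_mul_eq_num]
    have valuation_pow_eq := congrArg O.valuation pow_eq
    rw [map_pow, map_zpow₀, hv, one_zpow] at valuation_pow_eq
    exact (pow_eq_one_iff.1 valuation_pow_eq).resolve_right q.den_nz

/-- The logarithmic derivative of `exp v` as a linear function of `v`. -/
def logDerivExp {K : Type*} [CommRing K] [Algebra K ℂ] (D : Derivation K ℂ ℂ) : ℂ →ₗ[ℚ] ℂ :=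
  AddMonoidHom.toRatLinearMap
    { toFun := fun v => D (exp v) / exp v
      map_zero' := by simp
      map_add' := fun v w => by
        rw [exp_add, Derivation.leibniz]
        simp only [smul_eq_mul]
        field [exp_ne_zero v, exp_ne_zero w] }

variable {κ : Type*} [DecidableEq κ] {I J : Finset κ}

theorem exists_finite_forall_exists_valuation_mem {D : Derivation ℚ ℂ ℂ} {O : ValuationSubring ℂ}
    (hO : ∀ c : constantField D, c ≠ 0 → O.valuation (algebraMap _ ℂ c) = 1)
    (hJI : J ⊆ I) (hJ : J.Nonempty) (hne : J ≠ I) (c : κ → ℂ) {V : Submodule ℚ ℂ} (hV : V.FG) :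
    ∃ Γ : Set O.ValueGroup, Γ.Finite ∧ ∀ d : κ → ℂ,
      (∀ b ∈ I, ∀ b' ∈ I, d b - d b' ∈ V) → IsMinimalVanishing I (fun b => c b * exp (d b)) →
      ∃ k ∈ J, ∃ l ∈ I \ J, O.valuation (exp (d k - d l)) ∈ Γ := by
  obtain ⟨b₀, hb₀⟩ := hJ
  let K := constantField D
  let D' := constantFieldDerivation D
  obtain ⟨s, rfl⟩ := hV
  let E : Submodule K ℂ := Submodule.span K (logDerivExp D' '' s)
  have logDeriv_mem : Submodule.span ℚ s ≤ (E.restrictScalars ℚ).comap (logDerivExp D') :=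
    Submodule.span_le.2 fun v hv => Submodule.subset_span (mem_image_of_mem _ hv)
  obtain ⟨M, hM, exists_mul_eq_mul⟩ := exists_fg_forall_exists_separated_mul_eq_mul (ι := κ)
    (D := D') (fun x hx => ⟨⟨x, hx⟩, rfl⟩) I.card (Submodule.fg_span (I.finite_toSet.image c))
    (Submodule.fg_span (s.finite_toSet.image (logDerivExp D')))
  have finite_image := finite_image_valuation_of_fg hO hM
  refine ⟨image2 (· / ·) (O.valuation '' M) (O.valuation '' M),
    finite_image.image2 _ finite_image, fun d hd hmin => ?_⟩
  have sum_eq (T : Finset κ) : ∑ b ∈ T, c b * exp (d b - d b₀) =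
      (∑ b ∈ T, c b * exp (d b)) * exp (-d b₀) := by
    rw [Finset.sum_mul]
    exact Finset.sum_congr rfl fun b _ => by rw [mul_assoc, ← exp_add, sub_eq_add_neg]
  obtain ⟨k, hk, l, hl, r, hr, r', hr', r_ne_zero, -, hrr'⟩ :=
    exists_mul_eq_mul I J c (fun b => exp (d b - d b₀)) le_rfl hJI
      { ne_zero := fun b _ => exp_ne_zero _
        logDeriv_mem := fun b hb => logDeriv_mem (hd b hb b₀ (hJI hb₀))
        coeff_mem := fun b hb => Submodule.subset_span (mem_image_of_mem c hb)
        sum_eq_zero := by rw [sum_eq, hmin.1, zero_mul] }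
      (by
        rw [sum_eq]
        exact mul_ne_zero (fun h => hne (hmin.2 J hJI ⟨b₀, hb₀⟩ h)) (exp_ne_zero _))
  refine ⟨k, hk, l, hl, _, mem_image_of_mem _ hr', _, mem_image_of_mem _ hr, ?_⟩
  change O.valuation r' / O.valuation r = _
  rw [← map_div₀, ← sub_sub_sub_cancel_right (d k) (d l) (d b₀), exp_sub]
  exact congrArg O.valuation ((div_eq_div_iff r_ne_zero (exp_ne_zero _)).2
    (by rw [← hrr', mul_comm]))

theorem mul_sub_mem_logSpace_of_isMinimalVanishing {I : Finset ℂ} {c : ℂ → ℂ} {S : Set ℂ}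
    (hS : S.Infinite) (hmin : ∀ z ∈ S, IsMinimalVanishing I fun b => c b * exp (b * z))
    {V : Submodule ℚ ℂ} (hV : V.FG) (hSV : ∀ z ∈ S, ∀ b ∈ I, ∀ b' ∈ I, b * z - b' * z ∈ V)
    (hspan : ∀ S' ⊆ S, S'.Infinite → vectorSpan ℚ S' = vectorSpan ℚ S) {b b' z z' : ℂ}
    (hb : b ∈ I) (hb' : b' ∈ I) (hz : z ∈ S) (hz' : z' ∈ S) :
    (b - b') * (z - z') ∈ logSpace ∅ := by
  classical
  by_contra notMem
  obtain ⟨D, O, exp_notMem, hO⟩ := exists_constantField_valuationSubring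
    (t := exp ((b - b') * (z - z'))) fun h => notMem (mem_acl_of_isAlgebraic h)
  let J : Finset ℂ := {k ∈ I | ∀ v ∈ vectorSpan ℚ S, (b - k) * v ∈ valuationLogSpace O}
  have b_mem : b ∈ J := Finset.mem_filter.2 ⟨hb, fun v _ => by simp⟩
  have b'_notMem : b' ∉ J := fun h => exp_notMem ((O.valuation_le_one_iff _).1
    ((Finset.mem_filter.1 h).2 _ (vsub_mem_vectorSpan ℚ hz hz')).le)
  obtain ⟨Γ, hΓ, exists_valuation_mem⟩ := exists_finite_forall_exists_valuation_mem hO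
    (Finset.filter_subset _ I) ⟨b, b_mem⟩ (fun h => b'_notMem (h.symm ▸ hb' :)) c hV
  obtain ⟨⟨k, l, γ⟩, -, S', hS', S'_infinite, hγ⟩ := exists_infinite_subset_forall hS
    (J.finite_toSet.prod ((I \ J).finite_toSet.prod hΓ))
    (P := fun z p => p.1 ∈ J ∧ p.2.1 ∈ I \ J ∧ O.valuation (exp (p.1 * z - p.2.1 * z)) = p.2.2)
    fun z hz => by
      obtain ⟨k, hk, l, hl, mem⟩ := exists_valuation_mem _ (hSV z hz) (hmin z hz)
      exact ⟨(k, l, _), ⟨hk, hl, mem⟩, hk, hl, rfl⟩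
  obtain ⟨z₀, hz₀⟩ := S'_infinite.nonempty
  obtain ⟨hkJ, hlJ, -⟩ := hγ z₀ hz₀
  obtain ⟨hlI, l_notMem⟩ := Finset.mem_sdiff.1 hlJ
  have span_le : vectorSpan ℚ S' ≤ (valuationLogSpace O).comap (LinearMap.mulLeft ℚ (k - l)) := by
    refine Submodule.span_le.2 ?_
    rintro _ ⟨x, hx, y, hy, rfl⟩
    change O.valuation (exp ((k - l) * (x - y))) = 1
    rw [show (k - l) * (x - y) = k * x - l * x - (k * y - l * y) by ring, exp_sub, map_div₀,
      (hγ x hx).2.2, (hγ y hy).2.2, div_self]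
    rw [← (hγ x hx).2.2]
    simp
  refine l_notMem (Finset.mem_filter.2 ⟨hlI, fun v hv => ?_⟩)
  have kl_mem : (k - l) * v ∈ valuationLogSpace O := span_le (by rwa [hspan S' hS' S'_infinite])
  have := add_mem ((Finset.mem_filter.1 hkJ).2 v hv) kl_mem
  rwa [← add_mul, sub_add_sub_cancel] at this

end AlgebraicDifferences

section PadicPowers

open Polynomial

theorem C_dvd_of_forall_dvd_coeff_of_forall_eval_eq_zero {A : Type*} [CommRing A] [IsDomain A]
    {P : A[X]} {r : A} {Z : Finset A} (hcoeff : ∀ i, Z.card ≤ i → r ∣ P.coeff i)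
    (hZ : ∀ x ∈ Z, P.eval x = 0) : C r ∣ P := by
  rcases eq_or_ne P 0 with rfl | hP
  · exact dvd_zero _
  have monic_prod : (∏ x ∈ Z, (X - C x)).Monic := monic_prod_X_sub_C id Z
  have prod_dvd : ∏ x ∈ Z, (X - C x) ∣ P :=
    (Multiset.prod_X_sub_C_dvd_iff_le_roots hP Z.val).2 <|
      (Multiset.le_iff_subset Z.nodup).2 fun x hx => (mem_roots hP).2 (hZ x hx)
  let π := Ideal.Quotient.mk (Ideal.span {r})
  have map_eq_zero_iff_dvd (a : A) : π a = 0 ↔ r ∣ a := by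
    rw [Ideal.Quotient.eq_zero_iff_mem, Ideal.mem_span_singleton]
  have map_eq_zero : P.map π = 0 := by
    by_contra map_ne_zero
    have := Nontrivial.of_polynomial_ne map_ne_zero
    refine (monic_prod.map π).not_dvd_of_degree_lt map_ne_zero ?_ (map_dvd (mapRingHom π) prod_dvd)
    rw [monic_prod.degree_map, degree_eq_natDegree monic_prod.ne_zero,
      natDegree_finsetProd_X_sub_C_eq_card]
    refine (degree_lt_iff_coeff_zero _ _).2 fun i hi => ?_
    rw [coeff_map, map_eq_zero_iff_dvd]
    exact hcoeff i (mod_cast hi)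
  refine (C_dvd_iff_dvd_coeff r P).2 fun i => ?_
  rw [← map_eq_zero_iff_dvd, ← coeff_map, map_eq_zero, coeff_zero]

variable {p : ℕ}

theorem pow_padicValNat_factorial_add_dvd [Fact p.Prime] {s j J : ℕ} (hs : s ≤ j) (hj : j ≤ J) :
    p ^ (padicValNat p J.factorial + s) ∣ p ^ (2 * j) * (J.factorial / j.factorial) := by
  have factorial_dvd := Nat.factorial_dvd_factorial hj
  have quotient_ne_zero : J.factorial / j.factorial ≠ 0 :=
    (Nat.div_pos (Nat.factorial_le hj) j.factorial_pos).ne'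
  have pow_ne_zero : p ^ (2 * j) ≠ 0 := pow_ne_zero _ (Fact.out : p.Prime).ne_zero
  rw [padicValNat_dvd_iff_le (mul_ne_zero pow_ne_zero quotient_ne_zero),
    padicValNat.mul pow_ne_zero quotient_ne_zero, padicValNat.div_of_dvd factorial_dvd,
    padicValNat.prime_pow]
  have := padicValNat_factorial_le p j
  lia

theorem pow_dvd_of_pow_padicValNat_add_dvd_mul {A : Type*} [CommRing A] [IsDomain A] [CharZero A]
    [Fact p.Prime] {n s : ℕ} {x : A} (hn : n ≠ 0)
    (h : (p : A) ^ (padicValNat p n + s) ∣ n * x) : (p : A) ^ s ∣ x := by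
  have p_prime : p.Prime := Fact.out
  obtain ⟨u, hu⟩ : p ^ padicValNat p n ∣ n := pow_padicValNat_dvd
  have coprime_u : p.Coprime u := by
    refine (p_prime.coprime_iff_not_dvd).2 fun hpu =>
      pow_succ_padicValNat_not_dvd (p := p) hn ?_
    conv_rhs => rw [hu]
    exact mul_dvd_mul_left _ hpu
  have isCoprime_u : IsCoprime ((p : A) ^ s) u := by
    simpa using ((Nat.isCoprime_iff_coprime.2 coprime_u).map (Int.castRingHom A)).pow_left (m := s)
  refine isCoprime_u.dvd_of_dvd_mul_left ?_
  have pow_ne_zero : (p : A) ^ padicValNat p n ≠ 0 :=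
    pow_ne_zero _ (Nat.cast_ne_zero.2 p_prime.ne_zero)
  rw [← mul_dvd_mul_iff_left pow_ne_zero, ← pow_add, ← mul_assoc]
  convert! h
  conv_rhs => rw [hu]
  push_cast
  rfl

theorem eval_sum_C_mul_descPochhammer {A : Type*} [CommRing A] (q : A) (d : ℕ → A) (J m : ℕ) :
    (∑ j ∈ Finset.range (J + 1),
      C (q ^ (2 * j) * (J.factorial / j.factorial : ℕ) * d j) * descPochhammer A j).eval (m : A) =
      J.factorial * ∑ j ∈ Finset.range (J + 1), m.choose j * q ^ (2 * j) * d j := by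
  rw [Finset.mul_sum, eval_finsetSum]
  refine Finset.sum_congr rfl fun j hj => ?_
  have factorial_eq : (J.factorial : A) = (J.factorial / j.factorial : ℕ) * j.factorial := by
    rw [← Nat.cast_mul, Nat.div_mul_cancel <| Nat.factorial_dvd_factorial <|
      Nat.lt_succ_iff.1 <| Finset.mem_range.1 hj]
  rw [eval_mul, eval_C, descPochhammer_eval_eq_descFactorial,
    Nat.descFactorial_eq_factorial_mul_choose, factorial_eq]
  push_cast
  ring

/-- After multiplication by `J!` the sum is a polynomial in `n` whose coefficients of degree at
least `#Z` are divisible by a high power of `p`; its `#Z` roots force the same of all the others. -/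
theorem pow_card_dvd_sum_choose_mul {A : Type*} [CommRing A] [IsDomain A] [CharZero A]
    [Fact p.Prime] (d : ℕ → A) (J : ℕ) {Z : Finset ℕ}
    (hZ : ∀ n ∈ Z, ∑ j ∈ Finset.range (J + 1), n.choose j * (p : A) ^ (2 * j) * d j = 0) (n : ℕ) :
    (p : A) ^ Z.card ∣ ∑ j ∈ Finset.range (J + 1), n.choose j * (p : A) ^ (2 * j) * d j := by
  classical
  let P : A[X] := ∑ j ∈ Finset.range (J + 1),
    C ((p : A) ^ (2 * j) * (J.factorial / j.factorial : ℕ) * d j) * descPochhammer A j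
  let ZA : Finset A := Z.map Nat.castEmbedding
  have C_dvd : C ((p : A) ^ (padicValNat p J.factorial + Z.card)) ∣ P := by
    refine C_dvd_of_forall_dvd_coeff_of_forall_eval_eq_zero (Z := ZA) (fun i hi => ?_) ?_
    · rw [Finset.card_map] at hi
      rw [finsetSum_coeff]
      refine Finset.dvd_sum fun j hj => ?_
      rw [coeff_C_mul]
      rcases lt_or_ge j i with hji | hij
      · rw [coeff_eq_zero_of_natDegree_lt (by rwa [descPochhammer_natDegree]), mul_zero]
        exact dvd_zero _
      · have := pow_padicValNat_factorial_add_dvd (p := p) (hi.trans hij)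
          (Nat.lt_succ_iff.1 (Finset.mem_range.1 hj))
        exact ((mod_cast Nat.cast_dvd_cast (α := A) this : _ ∣ _).mul_right _).mul_right _
    · simp only [ZA, Finset.forall_mem_map, Nat.castEmbedding_apply]
      intro n hn
      rw [eval_sum_C_mul_descPochhammer, hZ n hn, mul_zero]
  refine pow_dvd_of_pow_padicValNat_add_dvd_mul J.factorial_ne_zero ?_
  rw [← eval_sum_C_mul_descPochhammer]
  simpa only [coe_evalRingHom, eval_C] using map_dvd (evalRingHom (n : A)) C_dvd

theorem one_add_mul_pow_eq_sum_choose {A : Type*} [CommRing A] (q b : A) {n J : ℕ} (hn : n ≤ J) :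
    (1 + q ^ 2 * b) ^ n = ∑ j ∈ Finset.range (J + 1), n.choose j * q ^ (2 * j) * b ^ j := by
  rw [add_comm, add_pow, ← Finset.sum_subset (Finset.range_mono (Nat.succ_le_succ hn))]
  · refine Finset.sum_congr rfl fun j _ => ?_
    ring
  · intro j _ hj
    rw [Nat.choose_eq_zero_of_lt (by simpa using hj), Nat.cast_zero, zero_mul, zero_mul]

theorem sum_mul_one_add_pow_eq_zero_of_infinite {A : Type*} [CommRing A] [IsDomain A] [CharZero A]
    [IsNoetherianRing A] [Fact p.Prime] (hp : ¬ IsUnit (p : A)) {ι : Type*} {I : Finset ι}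
    {c b : ι → A} (hinf : {n : ℕ | ∑ k ∈ I, c k * (1 + (p : A) ^ 2 * b k) ^ n = 0}.Infinite)
    (n : ℕ) : ∑ k ∈ I, c k * (1 + (p : A) ^ 2 * b k) ^ n = 0 := by
  have sum_eq {m J : ℕ} (hm : m ≤ J) : ∑ k ∈ I, c k * (1 + (p : A) ^ 2 * b k) ^ m =
      ∑ j ∈ Finset.range (J + 1), m.choose j * (p : A) ^ (2 * j) * ∑ k ∈ I, c k * b k ^ j := by
    simp only [one_add_mul_pow_eq_sum_choose _ _ hm, Finset.mul_sum]
    rw [Finset.sum_comm]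
    exact Finset.sum_congr rfl fun j _ => Finset.sum_congr rfl fun k _ => by ring
  have pow_dvd (s : ℕ) : (p : A) ^ s ∣ ∑ k ∈ I, c k * (1 + (p : A) ^ 2 * b k) ^ n := by
    obtain ⟨Z, hZ, rfl⟩ := hinf.exists_subset_card_eq s
    let J := n ⊔ Z.sup id
    rw [sum_eq (le_sup_left : n ≤ J)]
    refine pow_card_dvd_sum_choose_mul _ J (fun m hm => ?_) n
    rw [← sum_eq (show m ≤ J from (Finset.le_sup (f := id) hm).trans le_sup_right)]
    exact hZ hm
  have mem_iInf : ∑ k ∈ I, c k * (1 + (p : A) ^ 2 * b k) ^ n ∈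
      ⨅ s : ℕ, Ideal.span {(p : A)} ^ s := by
    refine (Submodule.mem_iInf _).2 fun s => ?_
    rw [Ideal.span_singleton_pow, Ideal.mem_span_singleton]
    exact pow_dvd s
  rwa [Ideal.iInf_pow_eq_bot_of_isDomain _ (by rwa [Ne, Ideal.span_singleton_eq_top]),
    Submodule.mem_bot] at mem_iInf

end PadicPowers

section SkolemMahlerLech

open NumberField

theorem exists_pow_eq_one_add_mul_of_isCoprime {A : Type*} [CommRing A] {γ q : A}
    [Finite (A ⧸ Ideal.span {q})] (h : IsCoprime γ q) :
    ∃ b, γ ^ Nat.card (A ⧸ Ideal.span {q})ˣ = 1 + q * b := by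
  obtain ⟨x, y, hxy⟩ := h
  have mul_eq_one : Ideal.Quotient.mk (Ideal.span {q}) γ * Ideal.Quotient.mk _ x = 1 := by
    rw [← map_mul, ← map_one (Ideal.Quotient.mk _), Ideal.Quotient.eq, Ideal.mem_span_singleton]
    exact ⟨-y, by linear_combination hxy⟩
  have pow_eq_one : Ideal.Quotient.mk (Ideal.span {q}) (γ ^ Nat.card (A ⧸ Ideal.span {q})ˣ) =
      Ideal.Quotient.mk _ 1 := by
    rw [map_pow, map_one]
    exact congrArg Units.val (pow_card_eq_one' (x := Units.mkOfMulEqOne _ _ mul_eq_one))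
  obtain ⟨b, hb⟩ := Ideal.mem_span_singleton.1 (Ideal.Quotient.eq.1 pow_eq_one)
  exact ⟨b, by rw [← hb, add_sub_cancel]⟩

variable {K ι : Type*} [Field K] [NumberField K] {I : Finset ι}

theorem exists_prime_forall_isCoprime {γ : ι → 𝓞 K} (hγ : ∀ k ∈ I, γ k ≠ 0) :
    ∃ p : ℕ, p.Prime ∧ ∀ k ∈ I, IsCoprime (γ k) (p : 𝓞 K) := by
  let N := Ideal.absNorm (Ideal.span {∏ k ∈ I, γ k})
  have N_pos : 0 < N := by
    rw [Nat.pos_iff_ne_zero, Ne, Ideal.absNorm_eq_zero_iff, Ideal.span_singleton_eq_bot]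
    exact Finset.prod_ne_zero_iff.2 hγ
  obtain ⟨p, N_lt, hp⟩ := Nat.exists_infinite_primes (N + 1)
  refine ⟨p, hp, fun k hk => ?_⟩
  have dvd_N : γ k ∣ (N : 𝓞 K) :=
    (Finset.dvd_prod_of_mem γ hk).trans (Ideal.mem_span_singleton.1 (Ideal.absNorm_mem _))
  have coprime : IsCoprime (N : ℤ) p :=
    Nat.isCoprime_iff_coprime.2 ((hp.coprime_iff_not_dvd.2 fun h =>
      (Nat.le_of_dvd N_pos h).not_gt N_lt).symm)
  refine IsCoprime.of_isCoprime_of_dvd_left ?_ dvd_N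
  simpa using coprime.map (Int.castRingHom (𝓞 K))

theorem not_isUnit_natCast_ringOfIntegers {p : ℕ} (hp : p.Prime) : ¬ IsUnit (p : 𝓞 K) := by
  intro h
  rw [← map_natCast (algebraMap ℤ (𝓞 K)), isUnit_map_iff] at h
  exact (Nat.prime_iff_prime_int.1 hp).not_isUnit h

variable (I) in
theorem exists_mul_eq_algebraMap_ringOfIntegers (α : ι → K) :
    ∃ d : 𝓞 K, d ≠ 0 ∧ ∃ γ : ι → 𝓞 K, ∀ k ∈ I, algebraMap (𝓞 K) K (γ k) = d * α k := by
  obtain ⟨d, hd⟩ := IsLocalization.exist_integer_multiples (nonZeroDivisors (𝓞 K)) I α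
  choose! γ hγ using hd
  exact ⟨d, nonZeroDivisors.coe_ne_zero d, γ, fun k hk => (hγ k hk).trans (Algebra.smul_def _ _)⟩

theorem exists_forall_sum_mul_pow_eq_zero_of_infinite {α : ι → K} (hα : ∀ k ∈ I, α k ≠ 0) :
    ∃ f : ℕ, f ≠ 0 ∧ ∀ (c : ι → K) (r : ℕ),
      {n : ℕ | ∑ k ∈ I, c k * α k ^ (r + f * n) = 0}.Infinite →
        ∀ n : ℕ, ∑ k ∈ I, c k * α k ^ (r + f * n) = 0 := by
  obtain ⟨d, hd, γ, hγ⟩ := exists_mul_eq_algebraMap_ringOfIntegers I α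
  have γ_ne_zero : ∀ k ∈ I, γ k ≠ 0 := fun k hk h =>
    mul_ne_zero (RingOfIntegers.coe_ne_zero_iff.2 hd) (hα k hk) (by rw [← hγ k hk, h, map_zero])
  obtain ⟨p, hp, coprime⟩ := exists_prime_forall_isCoprime γ_ne_zero
  have : Fact p.Prime := ⟨hp⟩
  have : Finite (𝓞 K ⧸ Ideal.span {(p : 𝓞 K) ^ 2}) := by
    refine Ideal.finiteQuotientOfFreeOfNeBot _ ?_
    rw [Ne, Ideal.span_singleton_eq_bot]
    exact pow_ne_zero _ (Nat.cast_ne_zero.2 hp.ne_zero)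
  choose! b hb using fun k hk =>
    exists_pow_eq_one_add_mul_of_isCoprime ((coprime k hk).pow_right (n := 2))
  set f := Nat.card (𝓞 K ⧸ Ideal.span {(p : 𝓞 K) ^ 2})ˣ
  refine ⟨f, Nat.card_pos.ne', fun c r hinf n => ?_⟩
  obtain ⟨e, he, c', hc'⟩ := exists_mul_eq_algebraMap_ringOfIntegers I c
  have sum_eq_zero_iff (n : ℕ) : ∑ k ∈ I, c' k * γ k ^ r * (1 + (p : 𝓞 K) ^ 2 * b k) ^ n = 0 ↔
      ∑ k ∈ I, c k * α k ^ (r + f * n) = 0 := by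
    have scale_ne_zero : (e * d ^ (r + f * n) : K) ≠ 0 :=
      mul_ne_zero (RingOfIntegers.coe_ne_zero_iff.2 he)
        (pow_ne_zero _ (RingOfIntegers.coe_ne_zero_iff.2 hd))
    rw [← RingOfIntegers.coe_eq_zero_iff, map_sum,
      ← mul_eq_zero_iff_left scale_ne_zero (b := ∑ k ∈ I, c k * _), Finset.mul_sum]
    refine iff_of_eq (congrArg (· = 0) (Finset.sum_congr rfl fun k hk => ?_))
    rw [← hb k hk, map_mul, map_mul, map_pow, map_pow, map_pow, hc' k hk, hγ k hk]
    ring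
  rw [← sum_eq_zero_iff]
  refine sum_mul_one_add_pow_eq_zero_of_infinite (not_isUnit_natCast_ringOfIntegers hp) ?_ n
  simpa only [sum_eq_zero_iff] using hinf

theorem exists_forall_sum_pow_smul_eq_zero_of_infinite {V : Type*} [AddCommGroup V] [Module K V]
    {α : ι → K} (hα : ∀ k ∈ I, α k ≠ 0) : ∃ f : ℕ, f ≠ 0 ∧ ∀ (c : ι → V) (r : ℕ),
      {n : ℕ | ∑ k ∈ I, α k ^ (r + f * n) • c k = 0}.Infinite →
        ∀ n : ℕ, ∑ k ∈ I, α k ^ (r + f * n) • c k = 0 := by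
  obtain ⟨f, hf, h⟩ := exists_forall_sum_mul_pow_eq_zero_of_infinite hα
  have dual_apply (φ : Module.Dual K V) (c : ι → V) (m : ℕ) :
      φ (∑ k ∈ I, α k ^ m • c k) = ∑ k ∈ I, φ (c k) * α k ^ m := by
    simp only [map_sum, map_smul, smul_eq_mul, mul_comm]
  refine ⟨f, hf, fun c r hinf n => (Module.forall_dual_apply_eq_zero_iff K _).1 fun φ => ?_⟩
  rw [dual_apply]
  refine h _ r (hinf.mono fun m hm => ?_) n
  rw [Set.mem_ofPred] at hm ⊢
  rw [← dual_apply, hm, map_zero]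

theorem exists_forall_sum_mul_pow_eq_zero_of_infinite_of_isAlgebraic {E : Type*} [Field E]
    [CharZero E] {α : ι → E} (halg : ∀ k ∈ I, IsAlgebraic ℚ (α k)) (hα : ∀ k ∈ I, α k ≠ 0) :
    ∃ f : ℕ, f ≠ 0 ∧ ∀ (c : ι → E) (r : ℕ),
      {n : ℕ | ∑ k ∈ I, c k * α k ^ (r + f * n) = 0}.Infinite →
        ∀ n : ℕ, ∑ k ∈ I, c k * α k ^ (r + f * n) = 0 := by
  let K := IntermediateField.adjoin ℚ (α '' (I : Set ι))
  have : Finite (α '' (I : Set ι)) := (I.finite_toSet.image α).to_subtype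
  have : FiniteDimensional ℚ K := IntermediateField.finiteDimensional_adjoin <| by
    rintro _ ⟨k, hk, rfl⟩
    exact (halg k hk).isIntegral
  have : NumberField K := ⟨⟩
  have mem_K : ∀ k ∈ I, ∃ a : K, (a : E) = α k := fun k hk =>
    ⟨⟨α k, IntermediateField.subset_adjoin _ _ ⟨k, hk, rfl⟩⟩, rfl⟩
  choose! a ha using mem_K
  obtain ⟨f, hf, h⟩ := exists_forall_sum_pow_smul_eq_zero_of_infinite (V := E) (I := I) (α := a)
    fun k hk hak => hα k hk (by rw [← ha k hk, hak, ZeroMemClass.coe_zero])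
  refine ⟨f, hf, fun c r => ?_⟩
  have sum_eq (n : ℕ) : ∑ k ∈ I, a k ^ (r + f * n) • c k = ∑ k ∈ I, c k * α k ^ (r + f * n) :=
    Finset.sum_congr rfl fun k hk => by
      rw [IntermediateField.smul_def, SubmonoidClass.coe_pow, ha k hk, smul_eq_mul, mul_comm]
  simpa only [sum_eq] using h c r

theorem exists_pow_eq_pow_of_isMinimalVanishing {E : Type*} [Field E] [CharZero E] {α c : ι → E}
    (halg : ∀ k ∈ I, IsAlgebraic ℚ (α k)) (hα : ∀ k ∈ I, α k ≠ 0) {T : Set ℕ} (hT : T.Infinite)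
    (hmin : ∀ n ∈ T, IsMinimalVanishing I fun k => c k * α k ^ n) :
    ∃ f : ℕ, f ≠ 0 ∧ ∀ k ∈ I, ∀ l ∈ I, α k ^ f = α l ^ f := by
  classical
  obtain ⟨f, hf, h⟩ := exists_forall_sum_mul_pow_eq_zero_of_infinite_of_isAlgebraic halg hα
  obtain ⟨r, -, T', hT', hT'inf, mod_eq⟩ := exists_infinite_subset_forall hT (Set.finite_Iio f)
    (P := fun n r => n % f = r) fun n _ => ⟨n % f, Nat.mod_lt _ (Nat.pos_of_ne_zero hf), rfl⟩
  have add_mul_div {n : ℕ} (hn : n ∈ T') : r + f * (n / f) = n := by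
    rw [← mod_eq n hn, Nat.mod_add_div]
  have sum_eq_zero : ∀ n : ℕ, ∑ k ∈ I, c k * α k ^ (r + f * n) = 0 := by
    refine h c r ((hT'inf.image (f := (· / f)) fun n hn m hm hnm => ?_).mono ?_)
    · rw [← add_mul_div hn, ← add_mul_div hm]
      exact congrArg (r + f * ·) hnm
    · rintro _ ⟨n, hn, rfl⟩
      rw [Set.mem_ofPred, add_mul_div hn]
      exact (hmin n (hT' hn)).1
  refine ⟨f, hf, fun k hk l hl => ?_⟩
  obtain ⟨n, hn⟩ := hT'inf.nonempty
  have sum_filter_eq_zero : ∑ i ∈ I with α i ^ f = α l ^ f, c i * α i ^ n = 0 := by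
    have coeff_sum := sum_filter_eq_zero_of_sum_mul_pow_eq_zero (s := I)
      (c := fun i => c i * α i ^ r) (a := fun i => α i ^ f)
      (fun m => by simpa only [mul_assoc, ← pow_mul, ← pow_add] using sum_eq_zero m) (α l ^ f)
    rw [← zero_mul ((α l ^ f) ^ (n / f)), ← coeff_sum, Finset.sum_mul]
    refine Finset.sum_congr rfl fun i hi => ?_
    rw [← (Finset.mem_filter.1 hi).2, mul_assoc, ← pow_mul, ← pow_add, add_mul_div hn]
  have filter_eq : {i ∈ I | α i ^ f = α l ^ f} = I :=
    (hmin n (hT' hn)).2 _ (Finset.filter_subset _ _) ⟨l, Finset.mem_filter.2 ⟨hl, rfl⟩⟩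
      sum_filter_eq_zero
  exact Finset.filter_eq_self.1 filter_eq k hk

end SkolemMahlerLech

section Kummer

theorem exists_coprime_forall_mul_eq_add {N : ℕ} (hN : N ≠ 0) :
    ∃ c : ℕ, c.Coprime N ∧ ∀ d : ℕ, ∃ u v : ℤ,
      (((2 ^ d - 1) * (3 ^ d - 1) : ℕ) : ℤ) = (c ^ d - 1) * u + N * v := by
  obtain ⟨e, m, hm, rfl⟩ := Nat.exists_eq_two_pow_mul_odd hN
  have coprime : m.Coprime (2 ^ e) := (Nat.coprime_two_right.2 hm).pow_right e
  obtain ⟨c, modEq_two, modEq_three⟩ := Nat.chineseRemainder coprime 2 3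
  refine ⟨c, Nat.Coprime.mul_right ?_ ?_, fun d => ?_⟩
  · rw [Nat.Coprime, modEq_three.gcd_eq]
    exact Nat.Coprime.pow_right e (by norm_num)
  · rw [Nat.Coprime, modEq_two.gcd_eq]
    exact Nat.coprime_two_left.2 hm
  obtain ⟨v, hv⟩ := mul_dvd_mul (modEq_three.symm.pow d).dvd (modEq_two.symm.pow d).dvd
  refine ⟨2 ^ d + 3 ^ d - c ^ d - 1, v, ?_⟩
  push_cast [Nat.one_le_pow] at hv ⊢
  linear_combination hv

theorem pow_apply_eq_pow_pow {k E : Type*} [Field k] [Field E] [Algebra k E] {σ : E ≃ₐ[k] E} {x : E}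
    {c : ℕ} (h : σ x = x ^ c) (d : ℕ) : (σ ^ d) x = x ^ c ^ d := by
  induction d with
  | zero => simp
  | succ d ih => rw [pow_succ', AlgEquiv.mul_apply, ih, map_pow, h, ← pow_mul, pow_succ']

theorem exists_algEquiv_apply_eq_pow {E : Type*} [Field E] [CharZero E] [Normal ℚ E] {N : ℕ}
    (hN : 0 < N) {ζ : E} (hζ : IsPrimitiveRoot ζ N) {c : ℕ} (hc : c.Coprime N) :
    ∃ σ : E ≃ₐ[ℚ] E, σ ζ = ζ ^ c := by
  rw [← isConjRoot_iff_exists_algEquiv, isConjRoot_def,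
    ← Polynomial.cyclotomic_eq_minpoly_rat hζ hN,
    ← Polynomial.cyclotomic_eq_minpoly_rat (hζ.pow_of_coprime c hc) hN]

variable {k E : Type*} [Field k] [Field E] [Algebra k E]

theorem mem_fixingSubgroup_sup_adjoin_singleton {K : IntermediateField k E} {ζ : E}
    {σ : E ≃ₐ[k] E} : σ ∈ (K ⊔ IntermediateField.adjoin k {ζ}).fixingSubgroup ↔
      σ ∈ K.fixingSubgroup ∧ σ ζ = ζ := by
  rw [IntermediateField.fixingSubgroup_sup, Subgroup.mem_inf]
  refine and_congr_right fun _ => ?_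
  rw [IntermediateField.mem_fixingSubgroup_iff]
  simpa using IntermediateField.forall_mem_adjoin_smul_eq_self_iff k (S := {ζ}) σ

theorem mem_of_forall_mem_fixingSubgroup [IsGalois k E] {K : IntermediateField k E} {x : E}
    (h : ∀ σ ∈ K.fixingSubgroup, σ x = x) : x ∈ K := by
  rwa [← InfiniteGalois.fixedField_fixingSubgroup K, IntermediateField.mem_fixedField_iff]

theorem exists_finiteDimensional_forall_pow_mem_fixingSubgroup [IsGalois k E] {F : Set E}
    (hF : F.Finite) : ∃ K : IntermediateField k E, FiniteDimensional k K ∧ F ⊆ K ∧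
      ∃ d : ℕ, d ≠ 0 ∧ ∀ σ : E ≃ₐ[k] E, σ ^ d ∈ K.fixingSubgroup := by
  let F₀ := IntermediateField.adjoin k F
  have : Finite F := hF.to_subtype
  have : FiniteDimensional k F₀ :=
    IntermediateField.finiteDimensional_adjoin fun x _ => Normal.isIntegral inferInstance x
  let K := IntermediateField.normalClosure k F₀ E
  refine ⟨K, inferInstance, (IntermediateField.subset_adjoin k F).trans
    (IntermediateField.le_normalClosure F₀), Nat.card (K ≃ₐ[k] K), Nat.card_pos.ne', fun σ => ?_⟩
  rw [← IntermediateField.restrictNormalHom_ker, MonoidHom.mem_ker, map_pow, pow_card_eq_one']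

variable {K : IntermediateField k E} {N : ℕ} {ζ x y : E}

theorem exists_apply_eq_pow_mul_of_pow_mem [NeZero N] (hζ : IsPrimitiveRoot ζ N) (hx : x ≠ 0)
    (hxN : x ^ N ∈ K) {σ : E ≃ₐ[k] E} (hσ : σ ∈ K.fixingSubgroup) : ∃ i, σ x = ζ ^ i * x := by
  rw [IntermediateField.mem_fixingSubgroup_iff] at hσ
  obtain ⟨i, -, hi⟩ := hζ.eq_pow_of_pow_eq_one (ξ := σ x / x)
    (by rw [div_pow, ← map_pow, hσ _ hxN, div_self (pow_ne_zero _ hx)])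
  exact ⟨i, by rw [hi, div_mul_cancel₀ _ hx]⟩

theorem apply_comm_of_mem_sup_adjoin_singleton [NeZero N] (hζ : IsPrimitiveRoot ζ N)
    (hy : y ∈ K ⊔ IntermediateField.adjoin k {ζ}) {σ τ : E ≃ₐ[k] E} (hσ : σ ∈ K.fixingSubgroup)
    (hτ : τ ∈ K.fixingSubgroup) : σ (τ y) = τ (σ y) := by
  have exists_pow (ρ : E ≃ₐ[k] E) : ∃ i, ζ ^ i = ρ ζ :=
    (hζ.eq_pow_of_pow_eq_one (ξ := ρ ζ) (by rw [← map_pow, hζ.pow_eq_one, map_one])).imp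
      fun _ h => h.2
  obtain ⟨i, hi⟩ := exists_pow σ
  obtain ⟨j, hj⟩ := exists_pow τ
  have commutator_fixes_ζ : ((τ * σ)⁻¹ * (σ * τ)) ζ = ζ := by
    rw [AlgEquiv.mul_apply, AlgEquiv.aut_inv, AlgEquiv.symm_apply_eq, AlgEquiv.mul_apply,
      AlgEquiv.mul_apply, ← hi, ← hj, map_pow, map_pow, ← hi, ← hj, pow_right_comm]
  have commutator_mem := mem_fixingSubgroup_sup_adjoin_singleton.2
    ⟨mul_mem (inv_mem (mul_mem hτ hσ)) (mul_mem hσ hτ), commutator_fixes_ζ⟩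
  have commutator_fixes_y := (IntermediateField.mem_fixingSubgroup_iff _ _).1 commutator_mem y hy
  rwa [AlgEquiv.mul_apply, AlgEquiv.aut_inv, AlgEquiv.symm_apply_eq] at commutator_fixes_y

theorem apply_div_pow_mem_of_mem_sup_adjoin_singleton [IsGalois k E] [NeZero N]
    (hζ : IsPrimitiveRoot ζ N) (hy₀ : y ≠ 0) (hyN : y ^ N ∈ K)
    (hy : y ∈ K ⊔ IntermediateField.adjoin k {ζ}) {τ : E ≃ₐ[k] E} (hτ : τ ∈ K.fixingSubgroup)
    {χ : ℕ} (hτζ : τ ζ = ζ ^ χ) : τ y / y ^ χ ∈ K := by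
  refine mem_of_forall_mem_fixingSubgroup fun σ hσ => ?_
  obtain ⟨i, hi⟩ := exists_apply_eq_pow_mul_of_pow_mem hζ hy₀ hyN hσ
  have root_ne_zero : (ζ ^ χ) ^ i ≠ 0 := pow_ne_zero _ (pow_ne_zero _ (hζ.ne_zero (NeZero.ne N)))
  rw [map_div₀, apply_comm_of_mem_sup_adjoin_singleton hζ hy hσ hτ, map_pow, hi, map_mul, map_pow,
    hτζ, mul_pow, pow_right_comm, mul_div_mul_left _ _ (pow_right_comm ζ i χ ▸ root_ne_zero)]

theorem exists_pow_eq_pow_of_mem_sup_adjoin_singleton {E : Type*} [Field E] [CharZero E]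
    [IsGalois ℚ E] {K : IntermediateField ℚ E} {d : ℕ}
    (hd : ∀ σ : E ≃ₐ[ℚ] E, σ ^ d ∈ K.fixingSubgroup) {N : ℕ} (hN : N ≠ 0) {ζ y : E}
    (hζ : IsPrimitiveRoot ζ N) (hy₀ : y ≠ 0) (hyN : y ^ N ∈ K)
    (hy : y ∈ K ⊔ IntermediateField.adjoin ℚ {ζ}) :
    ∃ v ∈ K, v ^ N = (y ^ N) ^ ((2 ^ d - 1) * (3 ^ d - 1)) := by
  have : NeZero N := ⟨hN⟩
  obtain ⟨c, hcN, hc⟩ := exists_coprime_forall_mul_eq_add hN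
  obtain ⟨σ, hσ⟩ := exists_algEquiv_apply_eq_pow (Nat.pos_of_ne_zero hN) hζ hcN
  obtain ⟨u, v, huv⟩ := hc d
  set w := (σ ^ d) y / y ^ c ^ d
  have w_mem : w ∈ K := apply_div_pow_mem_of_mem_sup_adjoin_singleton hζ hy₀ hyN hy (hd σ)
    (pow_apply_eq_pow_pow hσ d)
  have w_pow : (y ^ N) ^ ((c : ℤ) ^ d - 1) = w⁻¹ ^ N := by
    have fix_pow : (σ ^ d) (y ^ N) = y ^ N :=
      (IntermediateField.mem_fixingSubgroup_iff _ _).1 (hd σ) _ hyN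
    rw [zpow_sub_one₀ (pow_ne_zero _ hy₀), inv_pow, div_pow, ← map_pow, fix_pow, inv_div,
      div_eq_mul_inv, pow_right_comm]
    norm_cast
  refine ⟨w⁻¹ ^ u * (y ^ N) ^ v, mul_mem (zpow_mem (inv_mem w_mem) _) (zpow_mem hyN _), ?_⟩
  have zpow_pow_comm (a : E) (m : ℤ) : (a ^ m) ^ N = (a ^ N) ^ m := by
    rw [← zpow_natCast, ← zpow_natCast, zpow_comm]
  rw [← zpow_natCast (y ^ N) (_ * _), huv, zpow_add₀ (pow_ne_zero _ hy₀), zpow_mul, w_pow,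
    zpow_mul, zpow_natCast, mul_pow, zpow_pow_comm, zpow_pow_comm]

end Kummer

section Torsion

variable {K : Type*} [Field K]

theorem finite_setOf_exists_pow_eq [NumberField K] (A : K) :
    {v : K | ∃ N ≠ 0, v ^ N = A}.Finite := by
  obtain ⟨m, hm, hmA⟩ := ((IsFractionRing.isAlgebraic_iff ℤ ℚ K).2
    (Algebra.IsAlgebraic.isAlgebraic A)).exists_integral_multiple
  obtain ⟨R, hR⟩ := (Set.finite_range fun φ : K →+* ℂ => ‖φ A‖).bddAbove
  have mul_injective : Function.Injective ((m : K) * ·) :=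
    mul_right_injective₀ (Int.cast_ne_zero.2 hm)
  refine .of_finite_image ((NumberField.Embeddings.finite_of_norm_le K ℂ
    (‖(m : ℂ)‖ * max 1 R)).subset ?_) mul_injective.injOn
  rintro _ ⟨v, ⟨N, hN, rfl⟩, rfl⟩
  refine ⟨IsIntegral.of_pow (Nat.pos_of_ne_zero hN) ?_, fun φ => ?_⟩
  · have pow_eq : ((m : K) * v) ^ N = (m : K) ^ (N - 1) * (m • v ^ N) := by
      rw [mul_pow, zsmul_eq_mul, ← mul_assoc, pow_sub_one_mul hN]
    rw [pow_eq, ← Int.cast_pow]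
    exact (isIntegral_algebraMap (R := ℤ)).mul hmA
  · rw [map_mul, map_intCast, norm_mul]
    gcongr
    rcases le_total ‖φ v‖ 1 with h | h
    · exact h.trans (le_max_left _ _)
    · calc ‖φ v‖ ≤ ‖φ v‖ ^ N := le_self_pow₀ h hN
        _ = ‖φ (v ^ N)‖ := by rw [map_pow, norm_pow]
        _ ≤ max 1 R := (hR ⟨φ, rfl⟩).trans (le_max_right _ _)

theorem isOfFinOrder_of_pow_eq_pow {v : K} (hv : v ≠ 0) {m n : ℕ} (hmn : m < n)
    (h : v ^ m = v ^ n) : IsOfFinOrder v := by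
  refine isOfFinOrder_iff_pow_eq_one.2 ⟨n - m, Nat.sub_pos_of_lt hmn, ?_⟩
  rw [pow_sub₀ v hv hmn.le, ← h, mul_inv_cancel₀ (pow_ne_zero _ hv)]

theorem isOfFinOrder_of_infinite_setOf_exists_pow_eq [NumberField K] {A : K} (hA : A ≠ 0)
    {D : Set ℕ} (hD : D.Infinite) (h : ∀ N ∈ D, ∃ v : K, v ^ N = A) : IsOfFinOrder A := by
  have exists_root : ∀ N ∈ D \ {0}, ∃ v ∈ {v : K | ∃ N ≠ 0, v ^ N = A}, v ^ N = A := fun N hN =>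
    (h N hN.1).imp fun _ hv => ⟨⟨N, hN.2, hv⟩, hv⟩
  obtain ⟨v, -, D', hD', hD'inf, hv⟩ := exists_infinite_subset_forall
    (hD.sdiff (Set.finite_singleton 0)) (finite_setOf_exists_pow_eq A) exists_root
  obtain ⟨m, hm⟩ := hD'inf.nonempty
  obtain ⟨n, hn, hmn⟩ := hD'inf.exists_gt m
  have v_ne_zero : v ≠ 0 := by
    rintro rfl
    exact hA (by rw [← hv m hm, zero_pow (hD' hm).2])
  rw [← hv m hm]
  exact (isOfFinOrder_of_pow_eq_pow v_ne_zero hmn ((hv m hm).trans (hv n hn).symm)).pow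

end Torsion

section KummerCharacters

variable {ι : Type*} {I : Finset ι}

variable (I) in
theorem exists_finite_forall_sum_map_smul_eq_zero {E V : Type*} [Field E] [AddCommGroup V]
    [Module E V] (c : ι → V) : ∃ F : Set E, F.Finite ∧ ∀ σ : E →+* E, (∀ a ∈ F, σ a = a) →
      ∀ x : ι → E, ∑ k ∈ I, x k • c k = 0 → ∑ k ∈ I, σ (x k) • c k = 0 := by
  let b := Module.Basis.ofVectorSpace E V
  refine ⟨⋃ k ∈ I, Set.range (b.repr (c k)),
    I.finite_toSet.biUnion fun k _ => (b.repr (c k)).finite_range, fun σ hσ x hx => ?_⟩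
  have repr_sum (y : ι → E) (i) :
      b.repr (∑ k ∈ I, y k • c k) i = ∑ k ∈ I, y k * b.repr (c k) i := by
    simp only [map_sum, map_smul, Finsupp.coe_finsetSum, Finset.sum_apply, Finsupp.smul_apply,
      smul_eq_mul]
  refine b.ext_elem fun i => ?_
  calc b.repr (∑ k ∈ I, σ (x k) • c k) i
      = ∑ k ∈ I, σ (x k) * σ (b.repr (c k) i) := by
        rw [repr_sum]
        refine Finset.sum_congr rfl fun k hk => ?_
        rw [hσ _ (Set.mem_biUnion (x := k) hk ⟨i, rfl⟩)]
    _ = σ (b.repr (∑ k ∈ I, x k • c k) i) := by rw [repr_sum, map_sum]; simp only [map_mul]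
    _ = b.repr 0 i := by rw [hx, map_zero, Finsupp.zero_apply, map_zero]

variable {k E : Type*} [Field k] [Field E] [Algebra k E] {L : IntermediateField k E} {N : ℕ}
  [NeZero N] {ζ : E}

theorem exists_monoidHom_apply_eq_mul (hζ : IsPrimitiveRoot ζ N) (hζL : ζ ∈ L) {x : E}
    (hx : x ≠ 0) (hxN : x ^ N ∈ L) : ∃ χ : L.fixingSubgroup →* E, ∀ σ, σ.1 x = χ σ * x := by
  choose i hi using fun σ : L.fixingSubgroup =>
    exists_apply_eq_pow_mul_of_pow_mem hζ hx hxN σ.2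
  have fixes_ζ (σ : L.fixingSubgroup) : σ.1 ζ = ζ :=
    (IntermediateField.mem_fixingSubgroup_iff _ _).1 σ.2 ζ hζL
  refine ⟨⟨⟨fun σ => ζ ^ i σ, ?_⟩, fun σ τ => ?_⟩, hi⟩
  · exact mul_right_cancel₀ hx (by rw [← hi, one_mul]; rfl)
  · refine mul_right_cancel₀ hx ?_
    rw [← hi, Subgroup.coe_mul, AlgEquiv.mul_apply, hi τ, map_mul, map_pow, fixes_ζ, hi σ]
    ring

theorem mem_of_isMinimalVanishing [IsGalois k E] {M : Type*} [Field M] [Algebra E M]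
    (hζ : IsPrimitiveRoot ζ N) (hζL : ζ ∈ L) {x : ι → E} (hx : ∀ i ∈ I, x i ≠ 0)
    (hxN : ∀ i ∈ I, x i ^ N ∈ L) {c : ι → M} (hmin : IsMinimalVanishing I fun i => x i • c i)
    (hsum : ∀ σ ∈ L.fixingSubgroup, ∑ i ∈ I, σ (x i) • c i = 0) {i₀ : ι} (hi₀ : i₀ ∈ I)
    (hx₀ : x i₀ ∈ L) {i : ι} (hi : i ∈ I) : x i ∈ L := by
  classical
  choose! χ hχ using fun i hi => exists_monoidHom_apply_eq_mul hζ hζL (hx i hi) (hxN i hi)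
  let χM (i : ι) : L.fixingSubgroup →* M := (algebraMap E M : E →* M).comp (χ i)
  have χM_eq_one {i : ι} (hi : i ∈ I) : χM i = 1 ↔ ∀ σ ∈ L.fixingSubgroup, σ (x i) = x i := by
    rw [MonoidHom.ext_iff, Subtype.forall]
    refine forall₂_congr fun σ hσ => ?_
    rw [hχ i hi ⟨σ, hσ⟩, mul_eq_right₀ (hx i hi)]
    exact map_eq_one_iff _ (algebraMap E M).injective
  have sum_filter_eq_zero : ∑ i ∈ I with χM i = 1, x i • c i = 0 := by
    refine sum_filter_eq_zero_of_sum_mul_char_eq_zero (χ := χM) (fun σ => ?_) 1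
    rw [← hsum σ.1 σ.2]
    refine Finset.sum_congr rfl fun i hi => ?_
    rw [hχ i hi, mul_smul, Algebra.smul_def (χ i σ), mul_comm]
    rfl
  have i₀_mem : i₀ ∈ I.filter (χM · = 1) := Finset.mem_filter.2 ⟨hi₀, (χM_eq_one hi₀).2
    fun σ hσ => (IntermediateField.mem_fixingSubgroup_iff _ _).1 hσ _ hx₀⟩
  have filter_eq := hmin.2 _ (Finset.filter_subset _ _) ⟨i₀, i₀_mem⟩ sum_filter_eq_zero
  exact mem_of_forall_mem_fixingSubgroup ((χM_eq_one hi).1 (Finset.filter_eq_self.1 filter_eq i hi))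

end KummerCharacters

section TorsionOfMinimalVanishing

variable {ι : Type*} {I : Finset ι} {i₀ i : ι}

theorem mem_of_zpow_mem_of_zpow_mem {k E : Type*} [Field k] [Field E] [Algebra k E]
    {L : IntermediateField k E} {x : E} (hx : x ≠ 0) {a b : ℤ} (hab : IsCoprime a b)
    (ha : x ^ a ∈ L) (hb : x ^ b ∈ L) : x ∈ L := by
  obtain ⟨u, v, huv⟩ := hab
  rw [← zpow_one x, ← huv, zpow_add₀ hx, mul_comm u, mul_comm v, zpow_mul, zpow_mul]
  exact mul_mem (zpow_mem ha u) (zpow_mem hb v)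

variable {E M : Type*} [Field E] [CharZero E] [IsGalois ℚ E] [IsAlgClosed E] [Field M] [Algebra E M]

theorem exists_pow_eq_pow_of_isMinimalVanishing_zpow_smul {K : IntermediateField ℚ E} {d : ℕ}
    (hd : ∀ σ : E ≃ₐ[ℚ] E, σ ^ d ∈ K.fixingSubgroup) {c : ι → M}
    (hc : ∀ σ ∈ K.fixingSubgroup, ∀ x : ι → E,
      ∑ i ∈ I, x i • c i = 0 → ∑ i ∈ I, σ (x i) • c i = 0)
    {N : ℕ} (hN : N ≠ 0) {y : ι → E} (hy : ∀ i ∈ I, y i ≠ 0) (hyN : ∀ i ∈ I, y i ^ N ∈ K)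
    {a : ℤ} (ha : IsCoprime a N) (hmin : IsMinimalVanishing I fun i => y i ^ a • c i)
    (hi₀ : i₀ ∈ I) (hy₀ : y i₀ ∈ K) (hi : i ∈ I) :
    ∃ v ∈ K, v ^ N = (y i ^ N) ^ ((2 ^ d - 1) * (3 ^ d - 1)) := by
  have : NeZero N := ⟨hN⟩
  obtain ⟨ζ, hζ⟩ := HasEnoughRootsOfUnity.exists_primitiveRoot E N
  have K_le : K ≤ K ⊔ IntermediateField.adjoin ℚ {ζ} := le_sup_left
  have ζ_mem : ζ ∈ K ⊔ IntermediateField.adjoin ℚ {ζ} :=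
    (le_sup_right : IntermediateField.adjoin ℚ {ζ} ≤ _)
      (IntermediateField.mem_adjoin_simple_self ℚ ζ)
  have zpow_mem_sup : y i ^ a ∈ K ⊔ IntermediateField.adjoin ℚ {ζ} := by
    refine mem_of_isMinimalVanishing hζ ζ_mem (fun j hj => zpow_ne_zero a (hy j hj))
      (fun j hj => ?_) hmin (fun σ hσ => hc σ (mem_fixingSubgroup_sup_adjoin_singleton.1 hσ).1 _
        hmin.1) hi₀ (K_le (zpow_mem hy₀ a)) hi
    rw [← zpow_natCast, zpow_comm, zpow_natCast]
    exact K_le (zpow_mem (hyN j hj) a)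
  have mem_sup : y i ∈ K ⊔ IntermediateField.adjoin ℚ {ζ} :=
    mem_of_zpow_mem_of_zpow_mem (hy i hi) ha zpow_mem_sup
      (by rw [zpow_natCast]; exact K_le (hyN i hi))
  exact exists_pow_eq_pow_of_mem_sup_adjoin_singleton hd hN hζ (hy i hi) (hyN i hi) mem_sup

theorem isOfFinOrder_of_isMinimalVanishing_zpow_smul {e : ι → E} (he : ∀ i ∈ I, e i ≠ 0)
    {c : ι → M} {D : Set ℕ} (hD : D.Infinite) (hD₀ : 0 ∉ D) (hi₀ : i₀ ∈ I)
    (h : ∀ N ∈ D, ∃ a : ℤ, IsCoprime a N ∧ ∃ y : ι → E, (∀ i ∈ I, y i ^ N = e i) ∧ y i₀ = 1 ∧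
      IsMinimalVanishing I fun i => y i ^ a • c i)
    (hi : i ∈ I) : IsOfFinOrder (e i) := by
  obtain ⟨F, hF, descent⟩ := exists_finite_forall_sum_map_smul_eq_zero I c (E := E)
  obtain ⟨K, hKfin, hFK, d, hd, hdK⟩ := exists_finiteDimensional_forall_pow_mem_fixingSubgroup
    (k := ℚ) (hF.union (I.finite_toSet.image e))
  have : NumberField K := ⟨⟩
  have e_mem : ∀ i ∈ I, e i ∈ K := fun i hi => hFK (Or.inr ⟨i, hi, rfl⟩)
  have pow_ne_one (b : ℕ) (hb : 1 < b) : b ^ d - 1 ≠ 0 :=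
    (Nat.sub_pos_of_lt (Nat.one_lt_pow hd hb)).ne'
  suffices h : IsOfFinOrder ((⟨e i, e_mem i hi⟩ : K) ^ ((2 ^ d - 1) * (3 ^ d - 1))) by
    have := h.of_pow (mul_ne_zero (pow_ne_one 2 (by norm_num)) (pow_ne_one 3 (by norm_num)))
    exact MonoidHom.isOfFinOrder K.val.toRingHom.toMonoidHom this
  refine isOfFinOrder_of_infinite_setOf_exists_pow_eq
    (pow_ne_zero _ fun h => he i hi (congrArg Subtype.val h)) hD fun N hN => ?_
  obtain ⟨a, ha, y, hy, hy₀, hmin⟩ := h N hN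
  have hN₀ : N ≠ 0 := fun h => hD₀ (h ▸ hN)
  have hc : ∀ σ ∈ K.fixingSubgroup, ∀ x : ι → E,
      ∑ i ∈ I, x i • c i = 0 → ∑ i ∈ I, σ (x i) • c i = 0 := fun σ hσ =>
    descent σ.toRingEquiv.toRingHom fun x hx =>
      (IntermediateField.mem_fixingSubgroup_iff _ _).1 hσ x (hFK (Or.inl hx))
  obtain ⟨v, hv, hvN⟩ := exists_pow_eq_pow_of_isMinimalVanishing_zpow_smul hdK hc hN₀
    (fun j hj hyj => he j hj (by rw [← hy j hj, hyj, zero_pow hN₀]))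
    (fun j hj => by rw [hy j hj]; exact e_mem j hj) ha hmin hi₀ (hy₀ ▸ one_mem K) hi
  rw [hy i hi] at hvN
  exact ⟨⟨v, hv⟩, Subtype.ext hvN⟩

theorem isAlgClosure_rat_algebraicClosure : IsAlgClosure ℚ (algebraicClosure ℚ ℂ) := by
  rw [Subsingleton.elim (DivisionRing.toRatAlgebra : Algebra ℚ (algebraicClosure ℚ ℂ))
    (algebraicClosure ℚ ℂ).algebra']
  exact algebraicClosure.isAlgClosure ℚ ℂ

theorem exp_div_natCast_pow (z : ℂ) {n : ℕ} (hn : n ≠ 0) : exp (z / n) ^ n = exp z := by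
  rw [← exp_nat_mul, mul_div_cancel₀ _ (Nat.cast_ne_zero.2 hn)]

theorem isAlgebraic_exp_div_natCast {z : ℂ} (hz : IsAlgebraic ℚ (exp z)) {n : ℕ} (hn : n ≠ 0) :
    IsAlgebraic ℚ (exp (z / n)) :=
  .of_pow (Nat.pos_of_ne_zero hn) (by rwa [exp_div_natCast_pow z hn])

variable {c β : ι → ℂ} {T : Set ℚ}

theorem isOfFinOrder_exp_of_infinite_image_den (hT : (Rat.den '' T).Infinite)
    (halg : ∀ i ∈ I, IsAlgebraic ℚ (exp (β i)))
    (hmin : ∀ q ∈ T, IsMinimalVanishing I fun i => c i * exp (q * β i)) (hi₀ : i₀ ∈ I)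
    (hβ : β i₀ = 0) (hi : i ∈ I) : IsOfFinOrder (exp (β i)) := by
  have := isAlgClosure_rat_algebraicClosure
  have : IsAlgClosed (algebraicClosure ℚ ℂ) := IsAlgClosure.isAlgClosed ℚ
  have : IsGalois ℚ (algebraicClosure ℚ ℂ) := IsAlgClosure.isGalois ℚ _
  have exists_lift (n : ℕ) (hn : n ≠ 0) (i : ι) (hi : i ∈ I) :
      ∃ y : algebraicClosure ℚ ℂ, (y : ℂ) = exp (β i / n) :=
    ⟨⟨_, mem_algebraicClosure_iff.2 (isAlgebraic_exp_div_natCast (halg i hi) hn)⟩, rfl⟩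
  choose! y hy using exists_lift
  have y_pow (n : ℕ) (hn : n ≠ 0) (i : ι) (hi : i ∈ I) : y n i ^ n = y 1 i :=
    Subtype.ext <| by
      rw [SubmonoidClass.coe_pow, hy n hn i hi, hy 1 one_ne_zero i hi, exp_div_natCast_pow _ hn,
        Nat.cast_one, div_one]
  have order_y : IsOfFinOrder (y 1 i) := by
    refine isOfFinOrder_of_isMinimalVanishing_zpow_smul (c := c) (fun i hi h => ?_) hT ?_ hi₀ ?_ hi
    · exact exp_ne_zero _ ((hy 1 one_ne_zero i hi).symm.trans (congrArg Subtype.val h))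
    · rintro ⟨q, -, hq⟩
      exact q.den_nz hq
    · rintro _ ⟨q, hq, rfl⟩
      refine ⟨q.num, Rat.isCoprime_num_den q, y q.den, y_pow _ q.den_nz, Subtype.ext ?_,
        (hmin q hq).congr fun i hi => ?_⟩
      · rw [hy _ q.den_nz _ hi₀, hβ, zero_div, exp_zero, OneMemClass.coe_one]
      · rw [Algebra.smul_def, map_zpow₀, IntermediateField.algebraMap_apply, hy _ q.den_nz i hi,
          ← exp_int_mul, mul_comm]
        congr 2
        rw [Rat.cast_def q]
        ring
  have := MonoidHom.isOfFinOrder (algebraicClosure ℚ ℂ).val.toRingHom.toMonoidHom order_y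
  simpa [hy 1 one_ne_zero i hi] using this

theorem exists_pow_eq_pow_of_isMinimalVanishing_zpow {E : Type*} [Field E] [CharZero E]
    {α c : ι → E} (halg : ∀ i ∈ I, IsAlgebraic ℚ (α i)) (hα : ∀ i ∈ I, α i ≠ 0) {T : Set ℤ}
    (hT : T.Infinite) (hmin : ∀ n ∈ T, IsMinimalVanishing I fun i => c i * α i ^ n) :
    ∃ f : ℕ, f ≠ 0 ∧ ∀ i ∈ I, ∀ j ∈ I, α i ^ f = α j ^ f := by
  have nat_or_neg : {n : ℕ | (n : ℤ) ∈ T}.Infinite ∨ {n : ℕ | -(n : ℤ) ∈ T}.Infinite := by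
    by_contra! ⟨hpos, hneg⟩
    refine hT (((hpos.image Nat.cast).union (hneg.image fun n : ℕ => -(n : ℤ))).subset ?_)
    intro n hn
    rcases n.eq_nat_or_neg with ⟨m, rfl | rfl⟩
    exacts [Or.inl ⟨m, hn, rfl⟩, Or.inr ⟨m, hn, rfl⟩]
  rcases nat_or_neg with hpos | hneg
  · exact exists_pow_eq_pow_of_isMinimalVanishing halg hα hpos fun n hn => by
      simpa only [zpow_natCast] using hmin n hn
  · obtain ⟨f, hf, pow_eq⟩ := exists_pow_eq_pow_of_isMinimalVanishing (α := fun i => (α i)⁻¹)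
      (fun i hi => (halg i hi).inv) (fun i hi => inv_ne_zero (hα i hi)) hneg fun n hn => by
        simpa only [← zpow_natCast, inv_zpow'] using hmin _ hn
    exact ⟨f, hf, by simpa only [inv_pow, inv_inj] using pow_eq⟩

theorem exists_common_den (hT : (Rat.den '' T).Finite) :
    ∃ m : ℕ, m ≠ 0 ∧ ∀ q ∈ T, ∃ a : ℤ, q = a / m := by
  have prod_ne_zero : ∏ n ∈ hT.toFinset, n ≠ 0 := Finset.prod_ne_zero_iff.2 fun n hn => by
    obtain ⟨q, -, rfl⟩ := hT.mem_toFinset.1 hn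
    exact q.den_nz
  refine ⟨_, prod_ne_zero, fun q hq => ?_⟩
  obtain ⟨t, ht⟩ := Finset.dvd_prod_of_mem (fun n : ℕ => n)
    (hT.mem_toFinset.2 (Set.mem_image_of_mem Rat.den hq))
  refine ⟨q.num * t, (eq_div_iff (Nat.cast_ne_zero.2 prod_ne_zero)).2 ?_⟩
  rw [ht, Nat.cast_mul, ← mul_assoc, Rat.mul_den_eq_num, Int.cast_mul, Int.cast_natCast]

theorem isOfFinOrder_exp_of_isMinimalVanishing (hT : T.Infinite)
    (halg : ∀ i ∈ I, IsAlgebraic ℚ (exp (β i)))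
    (hmin : ∀ q ∈ T, IsMinimalVanishing I fun i => c i * exp (q * β i)) (hi₀ : i₀ ∈ I)
    (hβ : β i₀ = 0) (hi : i ∈ I) : IsOfFinOrder (exp (β i)) := by
  by_cases hden : (Rat.den '' T).Infinite
  · exact isOfFinOrder_exp_of_infinite_image_den hden halg hmin hi₀ hβ hi
  obtain ⟨m, hm, hTm⟩ := exists_common_den (Set.not_infinite.1 hden)
  have numerators_infinite : {a : ℤ | (a / m : ℚ) ∈ T}.Infinite := by
    refine fun hfin => hT ((hfin.image fun a : ℤ => (a / m : ℚ)).subset fun q hq => ?_)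
    obtain ⟨a, rfl⟩ := hTm q hq
    exact ⟨a, hq, rfl⟩
  obtain ⟨f, hf, pow_eq⟩ := exists_pow_eq_pow_of_isMinimalVanishing_zpow (I := I) (c := c)
    (α := fun i => exp (β i / m)) (fun i hi => isAlgebraic_exp_div_natCast (halg i hi) hm)
    (fun i _ => exp_ne_zero _) numerators_infinite fun a ha => (hmin _ ha).congr fun i _ => by
      rw [← exp_int_mul]
      push_cast
      congr 2
      ring
  have pow_eq_one : exp (β i / m) ^ f = 1 := by
    rw [pow_eq i hi i₀ hi₀, hβ, zero_div, exp_zero, one_pow]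
  rw [← exp_div_natCast_pow (β i) hm]
  exact (isOfFinOrder_iff_pow_eq_one.2 ⟨f, Nat.pos_of_ne_zero hf, pow_eq_one⟩).pow

end TorsionOfMinimalVanishing

section CommensurableExponents

theorem exists_int_smul_eq_of_mem_span_singleton {E κ : Type*} [AddCommGroup E] [Module ℚ E]
    {I : Finset κ} {x : κ → E} {u : E} (h : ∀ b ∈ I, x b ∈ Submodule.span ℚ {u}) :
    ∃ (v : E) (m : κ → ℤ), ∀ b ∈ I, x b = m b • v := by
  choose! q hq using fun b hb => Submodule.mem_span_singleton.1 (h b hb)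
  obtain ⟨N, -, hN⟩ := exists_common_den ((I.finite_toSet.image q).image Rat.den)
  choose! m hm using fun b (hb : b ∈ I) => hN _ (mem_image_of_mem q hb)
  refine ⟨(N : ℚ)⁻¹ • u, m, fun b hb => ?_⟩
  rw [← hq b hb, hm b hb, ← Int.cast_smul_eq_zsmul ℚ, smul_smul, div_eq_mul_inv]

theorem finite_setOf_sum_mul_zpow_eq_zero {K κ : Type*} [Field K] {I : Finset κ} {c : κ → K}
    {m : κ → ℤ} (hm : InjOn m I) {b : κ} (hb : b ∈ I) (hcb : c b ≠ 0) :
    {x : K | x ≠ 0 ∧ ∑ k ∈ I, c k * x ^ m k = 0}.Finite := by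
  obtain ⟨N, toNat_eq⟩ := exists_nat_forall_toNat_add_eq I fun k (_ : Unit) => m k
  let e (k : κ) : ℕ := (m k + N).toNat
  have e_eq : ∀ k ∈ I, (e k : ℤ) = m k + N := fun k hk => toNat_eq k hk ()
  let P : Polynomial K := ∑ k ∈ I, Polynomial.monomial (e k) (c k)
  have coeff_P : P.coeff (e b) = c b := by
    simp only [P, Polynomial.finsetSum_coeff, Polynomial.coeff_monomial]
    refine (Finset.sum_eq_single_of_mem b hb fun k hk hne => if_neg fun h => hne ?_).trans
      (if_pos rfl)
    have := e_eq k hk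
    have := e_eq b hb
    exact hm hk hb (by omega)
  have P_ne_zero : P ≠ 0 := by
    rintro h
    rw [h, Polynomial.coeff_zero] at coeff_P
    exact hcb coeff_P.symm
  refine (Polynomial.finite_setOfPred_isRoot P_ne_zero).subset fun x ⟨hx, hsum⟩ => ?_
  have eval_P : P.eval x = (∑ k ∈ I, c k * x ^ m k) * x ^ N := by
    rw [Polynomial.eval_finsetSum, Finset.sum_mul]
    refine Finset.sum_congr rfl fun k hk => ?_
    rw [Polynomial.eval_monomial, mul_assoc, ← zpow_natCast, ← zpow_natCast, ← zpow_add₀ hx,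
      e_eq k hk]
  exact eval_P.trans (by rw [hsum, zero_mul])

theorem exists_infinite_exp_mul_sub_eq_one_of_mem_span_singleton {I : Finset ℂ} {c : ℂ → ℂ}
    {S : Set ℂ} (hS : S.Infinite) (hsum : ∀ z ∈ S, ∑ b ∈ I, c b * exp (b * z) = 0) {b₀ u : ℂ}
    (hspan : ∀ b ∈ I, b - b₀ ∈ Submodule.span ℚ {u}) {b₁ : ℂ} (hb₁ : b₁ ∈ I) (hc : c b₁ ≠ 0) :
    ∃ S' ⊆ S, S'.Infinite ∧
      ∀ b ∈ I, ∀ b' ∈ I, ∀ z ∈ S', ∀ z' ∈ S', exp ((b - b') * (z - z')) = 1 := by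
  obtain ⟨v, m, hm⟩ := exists_int_smul_eq_of_mem_span_singleton hspan
  simp only [zsmul_eq_mul] at hm
  have m_injOn : InjOn m I := fun b hb b' hb' h => sub_left_injective
    (show b - b₀ = b' - b₀ by rw [hm b hb, hm b' hb', h])
  have sum_zpow_eq_zero : ∀ z ∈ S, ∑ b ∈ I, c b * exp (v * z) ^ m b = 0 := by
    intro z hz
    rw [← zero_mul (exp (-b₀ * z)), ← hsum z hz, Finset.sum_mul]
    refine Finset.sum_congr rfl fun b hb => ?_
    rw [mul_assoc, ← exp_add, ← exp_int_mul]
    congr 2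
    linear_combination -z * hm b hb
  obtain ⟨x, ⟨x_ne_zero, -⟩, S', hS', S'_infinite, exp_eq⟩ := exists_infinite_subset_forall hS
    (finite_setOf_sum_mul_zpow_eq_zero m_injOn hb₁ hc) (P := fun z x => exp (v * z) = x)
    fun z hz => ⟨_, ⟨exp_ne_zero _, sum_zpow_eq_zero z hz⟩, rfl⟩
  refine ⟨S', hS', S'_infinite, fun b hb b' hb' z hz z' hz' => ?_⟩
  have exponent_eq : (b - b') * (z - z') = (m b - m b' : ℤ) * (v * z - v * z') := by
    push_cast
    linear_combination (z - z') * hm b hb - (z - z') * hm b' hb'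
  rw [exponent_eq, exp_int_mul, exp_sub, exp_eq z hz, exp_eq z' hz', div_self x_ne_zero, one_zpow]

end CommensurableExponents

section ProgressionOfZeros

theorem IsMinimalVanishing.const_mul {κ R : Type*} [Semiring R] [NoZeroDivisors R]
    {I : Finset κ} {y : κ → R} (h : IsMinimalVanishing I y) {t : R} (ht : t ≠ 0) :
    IsMinimalVanishing I fun b => t * y b := by
  refine ⟨by rw [← Finset.mul_sum, h.1, mul_zero], fun J hJ hne hsum => h.2 J hJ hne ?_⟩
  rw [← Finset.mul_sum] at hsum
  exact (mul_eq_zero.1 hsum).resolve_left ht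

theorem exists_infinite_forall_vectorSpan_eq {E : Type*} [AddCommGroup E] [Module ℚ E]
    {S : Set E} (hS : S.Infinite) {W : Submodule ℚ E} [FiniteDimensional ℚ W] (hSW : S ⊆ W) :
    ∃ S₁ ⊆ S, S₁.Infinite ∧ ∀ S' ⊆ S₁, S'.Infinite → vectorSpan ℚ S' = vectorSpan ℚ S₁ := by
  obtain ⟨S₁, ⟨hS₁, S₁_infinite⟩, finrank_le⟩ := exists_minimalFor_of_wellFoundedLT
    (fun S' => S' ⊆ S ∧ S'.Infinite) (fun S' => Module.finrank ℚ (vectorSpan ℚ S'))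
    ⟨S, subset_rfl, hS⟩
  have vectorSpan_le : vectorSpan ℚ S₁ ≤ W := Submodule.span_le.2 <| by
    rintro _ ⟨x, hx, y, hy, rfl⟩
    exact W.sub_mem (hSW (hS₁ hx)) (hSW (hS₁ hy))
  have : FiniteDimensional ℚ (vectorSpan ℚ S₁) := Submodule.finiteDimensional_of_le vectorSpan_le
  refine ⟨S₁, hS₁, S₁_infinite, fun S' hS' S'_infinite => ?_⟩
  have le := vectorSpan_mono ℚ hS'
  exact Submodule.eq_of_le_of_finrank_le le
    (finrank_le ⟨hS'.trans hS₁, S'_infinite⟩ (Submodule.finrank_mono le))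

theorem mem_span_singleton_of_isOfFinOrder_exp {v w : ℂ} (hv₀ : v ≠ 0)
    (hv : IsOfFinOrder (exp v)) (hw : IsOfFinOrder (exp w)) : w ∈ Submodule.span ℚ {v} := by
  obtain ⟨n, hn, hnv⟩ := isOfFinOrder_iff_pow_eq_one.1 hv
  obtain ⟨n', hn', hnw⟩ := isOfFinOrder_iff_pow_eq_one.1 hw
  rw [← exp_nat_mul] at hnv hnw
  obtain ⟨k, hk⟩ := exp_eq_one_iff.1 hnv
  obtain ⟨k', hk'⟩ := exp_eq_one_iff.1 hnw
  have n_ne_zero : (n : ℂ) ≠ 0 := Nat.cast_ne_zero.2 hn.ne'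
  have n'_ne_zero : (n' : ℂ) ≠ 0 := Nat.cast_ne_zero.2 hn'.ne'
  have k_ne_zero : (k : ℂ) ≠ 0 := fun h => by
    rw [h, zero_mul] at hk
    exact mul_ne_zero n_ne_zero hv₀ hk
  refine Submodule.mem_span_singleton.2 ⟨k' * n / (n' * k), ?_⟩
  rw [Rat.smul_def]
  push_cast
  rw [div_mul_eq_mul_div, div_eq_iff (mul_ne_zero n'_ne_zero k_ne_zero)]
  linear_combination k' * hk - k * hk'

variable {I C : Finset ℂ} {c : ℂ → ℂ} {S : Set ℂ}

theorem isOfFinOrder_exp_mul_of_isMinimalVanishing (hS : S.Infinite)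
    (hmin : ∀ z ∈ S, IsMinimalVanishing I fun b => c b * exp (b * z)) {z₀ u : ℂ}
    (hline : ∀ z ∈ S, z - z₀ ∈ Submodule.span ℚ {u}) {b₀ : ℂ} (hb₀ : b₀ ∈ I)
    (halg : ∀ b ∈ I, (b - b₀) * u ∈ logSpace ∅) {b : ℂ} (hb : b ∈ I) :
    IsOfFinOrder (exp ((b - b₀) * u)) := by
  have infinite : {q : ℚ | z₀ + q * u ∈ S}.Infinite := by
    refine fun finite => hS ((finite.image fun q : ℚ => z₀ + q * u).subset fun z hz => ?_)
    obtain ⟨q, hq⟩ := Submodule.mem_span_singleton.1 (hline z hz)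
    have z_eq : z₀ + q * u = z := by rw [← Rat.smul_def, hq, add_sub_cancel]
    exact ⟨q, by rwa [mem_ofPred, z_eq], z_eq⟩
  refine isOfFinOrder_exp_of_isMinimalVanishing (c := fun b => c b * exp (b * z₀))
    (β := fun b => (b - b₀) * u) infinite (fun b hb => isAlgebraic_of_mem_acl_empty (halg b hb))
    (fun q hq => ?_) hb₀ (by rw [sub_self, zero_mul]) hb
  refine ((hmin _ hq).const_mul (exp_ne_zero (-(b₀ * (q * u))))).congr fun b _ => ?_
  rw [mul_left_comm (exp _), mul_assoc, ← exp_add, ← exp_add]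
  ring_nf

theorem SchanuelConjecture.exists_infinite_mul_sub_mem_logSpace (hSC : SchanuelConjecture)
    (hI : ∀ b ∈ I, b ∈ acl ℚ (C : Set ℂ)) (hc : ∀ b ∈ I, c b ∈ acl ℚ (C : Set ℂ))
    (hS : S.Infinite) (hSC' : S ⊆ acl ℚ (C : Set ℂ))
    (hmin : ∀ z ∈ S, IsMinimalVanishing I fun b => c b * exp (b * z)) :
    ∃ S₁ ⊆ S, S₁.Infinite ∧
      ∀ b ∈ I, ∀ b' ∈ I, ∀ z ∈ S₁, ∀ z' ∈ S₁, (b - b') * (z - z') ∈ logSpace ∅ := by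
  by_cases hI' : (I : Set ℂ).Subsingleton
  · refine ⟨S, subset_rfl, hS, fun b hb b' hb' z _ z' _ => ?_⟩
    rw [hI' hb hb', sub_self, zero_mul]
    exact zero_mem _
  obtain ⟨b₀, hb₀, b₁, hb₁, hne⟩ := not_subsingleton_iff.1 hI'
  obtain ⟨V, V_finiteDimensional, hSV⟩ := hSC.exists_finiteDimensional_forall_sub_mem hc
    (fun z hz b hb => mul_mem (hI b hb) (hSC' hz)) hmin
  have S_subset : S ⊆ V.map (LinearMap.mulLeft ℚ (b₀ - b₁)⁻¹) := fun z hz =>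
    ⟨_, hSV z hz b₀ hb₀ b₁ hb₁, by
      rw [LinearMap.mulLeft_apply, ← sub_mul, inv_mul_cancel_left₀ (sub_ne_zero.2 hne)]⟩
  obtain ⟨S₁, hS₁, S₁_infinite, vectorSpan_eq⟩ := exists_infinite_forall_vectorSpan_eq hS S_subset
  exact ⟨S₁, hS₁, S₁_infinite, fun b hb b' hb' z hz z' hz' =>
    mul_sub_mem_logSpace_of_isMinimalVanishing S₁_infinite (fun z hz => hmin z (hS₁ hz))
      (Submodule.fg_iff_finiteDimensional V |>.2 V_finiteDimensional)
      (fun z hz => hSV z (hS₁ hz)) vectorSpan_eq hb hb' hz hz'⟩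

theorem SchanuelConjecture.sub_mem_span_singleton_of_isMinimalVanishing (hSC : SchanuelConjecture)
    (hI : ∀ b ∈ I, b ∈ acl ℚ (C : Set ℂ)) (hc : ∀ b ∈ I, c b ∈ acl ℚ (C : Set ℂ))
    (hS : S.Infinite) (hSC' : S ⊆ acl ℚ (C : Set ℂ))
    (hmin : ∀ z ∈ S, IsMinimalVanishing I fun b => c b * exp (b * z)) {b₀ b₁ b₂ : ℂ}
    (hb₀ : b₀ ∈ I) (hb₁ : b₁ ∈ I) (hb₂ : b₂ ∈ I) (hne : b₁ ≠ b₀) :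
    b₂ - b₀ ∈ Submodule.span ℚ {b₁ - b₀} := by
  by_contra notMem
  obtain ⟨S₁, hS₁, S₁_infinite, mem_logSpace⟩ :=
    hSC.exists_infinite_mul_sub_mem_logSpace hI hc hS hSC' hmin
  obtain ⟨z₀, hz₀, z₁, hz₁, z_ne⟩ := S₁_infinite.nontrivial
  have b_ne : b₁ - b₀ ≠ 0 := sub_ne_zero.2 hne
  have u_ne : z₁ - z₀ ≠ 0 := sub_ne_zero.2 z_ne.symm
  have hline : ∀ z ∈ S₁, z - z₀ ∈ Submodule.span ℚ {z₁ - z₀} := fun z hz =>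
    (hSC.mem_span_singleton_or_mem_span_singleton b_ne u_ne
      (mem_logSpace b₁ hb₁ b₀ hb₀ z₁ hz₁ z₀ hz₀) (mem_logSpace b₁ hb₁ b₀ hb₀ z hz z₀ hz₀)
      (mem_logSpace b₂ hb₂ b₀ hb₀ z₁ hz₁ z₀ hz₀)
      (mem_logSpace b₂ hb₂ b₀ hb₀ z hz z₀ hz₀)).resolve_left notMem
  have isOfFinOrder {b : ℂ} (hb : b ∈ I) : IsOfFinOrder (exp ((b - b₀) * (z₁ - z₀))) :=
    isOfFinOrder_exp_mul_of_isMinimalVanishing S₁_infinite (fun z hz => hmin z (hS₁ hz)) hline hb₀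
      (fun b hb => mem_logSpace b hb b₀ hb₀ z₁ hz₁ z₀ hz₀) hb
  obtain ⟨q, hq⟩ := Submodule.mem_span_singleton.1 (mem_span_singleton_of_isOfFinOrder_exp
    (mul_ne_zero b_ne u_ne) (isOfFinOrder hb₁) (isOfFinOrder hb₂))
  rw [← smul_mul_assoc] at hq
  exact notMem (Submodule.mem_span_singleton.2 ⟨q, mul_right_cancel₀ u_ne hq⟩)

theorem SchanuelConjecture.exists_infinite_exp_mul_sub_eq_one (hSC : SchanuelConjecture)
    (hI : ∀ b ∈ I, b ∈ acl ℚ (C : Set ℂ)) (hc : ∀ b ∈ I, c b ∈ acl ℚ (C : Set ℂ))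
    (hS : S.Infinite) (hSC' : S ⊆ acl ℚ (C : Set ℂ))
    (hmin : ∀ z ∈ S, IsMinimalVanishing I fun b => c b * exp (b * z)) :
    ∃ S' ⊆ S, S'.Infinite ∧
      ∀ b ∈ I, ∀ b' ∈ I, ∀ z ∈ S', ∀ z' ∈ S', exp ((b - b') * (z - z')) = 1 := by
  by_cases hI' : (I : Set ℂ).Subsingleton
  · refine ⟨S, subset_rfl, hS, fun b hb b' hb' z _ z' _ => ?_⟩
    rw [hI' hb hb', sub_self, zero_mul, exp_zero]
  obtain ⟨b₀, hb₀, b₁, hb₁, hne⟩ := not_subsingleton_iff.1 hI'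
  refine exists_infinite_exp_mul_sub_eq_one_of_mem_span_singleton hS (fun z hz => (hmin z hz).1)
    (fun b hb => hSC.sub_mem_span_singleton_of_isMinimalVanishing hI hc hS hSC' hmin hb₀ hb₁ hb
      hne.symm) hb₁ fun c_eq_zero => ?_
  obtain ⟨z, hz⟩ := hS.nonempty
  have singleton_eq := (hmin z hz).2 {b₁} (Finset.singleton_subset_iff.2 hb₁)
    (Finset.singleton_nonempty b₁) (by rw [Finset.sum_singleton, c_eq_zero, zero_mul])
  exact hne (Finset.mem_singleton.1 (singleton_eq ▸ hb₀))

theorem sum_mul_exp_progression_eq_zero {z z' : ℂ} (hz : ∑ b ∈ I, c b * exp (b * z) = 0)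
    (hexp : ∀ b ∈ I, ∀ b' ∈ I, exp ((b - b') * (z' - z)) = 1) (m : ℕ) :
    ∑ b ∈ I, c b * exp (b * (z + m * (z' - z))) = 0 := by
  rcases I.eq_empty_or_nonempty with rfl | ⟨b₀, hb₀⟩
  · rfl
  have term_eq : ∀ b ∈ I, c b * exp (b * (z + m * (z' - z))) =
      exp (b₀ * (z' - z)) ^ m * (c b * exp (b * z)) := by
    intro b hb
    have exp_eq : exp (b * (z' - z)) = exp (b₀ * (z' - z)) := by
      rw [← sub_add_cancel b b₀, add_mul, exp_add, hexp b hb b₀ hb₀, one_mul]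
    rw [← exp_eq, ← exp_nat_mul, mul_left_comm, ← exp_add]
    ring_nf
  rw [Finset.sum_congr rfl term_eq, ← Finset.mul_sum, hz, mul_zero]

theorem SchanuelConjecture.exists_infinite_progression_eq_zero (hSC : SchanuelConjecture)
    (hI : ∀ b ∈ I, b ∈ acl ℚ (C : Set ℂ)) (hc : ∀ b ∈ I, c b ∈ acl ℚ (C : Set ℂ))
    (hS : S.Infinite) (hSC' : S ⊆ acl ℚ (C : Set ℂ))
    (hsum : ∀ z ∈ S, ∑ b ∈ I, c b * exp (b * z) = 0) :
    ∃ S' ⊆ S, S'.Infinite ∧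
      ∀ z ∈ S', ∀ z' ∈ S', ∀ m : ℕ, ∑ b ∈ I, c b * exp (b * (z + m * (z' - z))) = 0 := by
  classical
  induction I using Finset.strongInduction generalizing S with
  | H I ih =>
    rcases I.eq_empty_or_nonempty with rfl | hne
    · exact ⟨S, subset_rfl, hS, fun z _ z' _ m => rfl⟩
    obtain ⟨J, J_subset, J_nonempty, S₁, hS₁, S₁_infinite, hmin⟩ :=
      exists_infinite_isMinimalVanishing hne hS hsum
    obtain ⟨S₂, hS₂, S₂_infinite, exp_eq_one⟩ := hSC.exists_infinite_exp_mul_sub_eq_one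
      (fun b hb => hI b (J_subset hb)) (fun b hb => hc b (J_subset hb)) S₁_infinite
      (hS₁.trans hSC') hmin
    have S₂_subset : S₂ ⊆ S := hS₂.trans hS₁
    have sum_sdiff : ∀ z ∈ S₂, ∑ b ∈ I \ J, c b * exp (b * z) = 0 := fun z hz => by
      have sum_eq := hsum z (S₂_subset hz)
      rwa [← Finset.sum_sdiff J_subset, (hmin z (hS₂ hz)).1, add_zero] at sum_eq
    obtain ⟨S₃, hS₃, S₃_infinite, progression⟩ := ih (I \ J)
      (Finset.sdiff_ssubset J_subset J_nonempty) (fun b hb => hI b (Finset.sdiff_subset hb))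
      (fun b hb => hc b (Finset.sdiff_subset hb)) S₂_infinite (S₂_subset.trans hSC') sum_sdiff
    refine ⟨S₃, hS₃.trans S₂_subset, S₃_infinite, fun z hz z' hz' m => ?_⟩
    rw [← Finset.sum_sdiff J_subset, progression z hz z' hz' m, zero_add]
    exact sum_mul_exp_progression_eq_zero (hmin z (hS₂ (hS₃ hz))).1
      (fun b hb b' hb' => exp_eq_one b hb b' hb' z' (hS₃ hz') z (hS₃ hz)) m

end ProgressionOfZeros

/-- Assuming Schanuel's Conjecture: if `f` is irreducible and `f, g` are nonzero with
infinitely many common zeros, then `f` divides `g` in `𝓔`. -/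
theorem shapiro_irreducible_divides (hSC : SchanuelConjecture)
    (f g : ℂ → ℂ) (hf : IsExpPoly f) (hg : IsExpPoly g)
    (hf0 : f ≠ 0) (hg0 : g ≠ 0) (hfirr : EIrreducible f)
    (hinf : {z : ℂ | f z = 0 ∧ g z = 0}.Infinite) :
    EDvd f g := by
  classical
  by_contra not_dvd
  have irreducible : Irreducible (⟨f, hf⟩ : expPolyRing) := hfirr.irreducible
  obtain ⟨C, zeros_subset⟩ := hSC.exists_finset_commonZeros_subset_acl irreducible
    (mt (eDvd_iff_dvd (g := ⟨g, hg⟩)).2 not_dvd)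
  obtain ⟨I, c, f_eq⟩ := hf.exists_finset_eq_sum
  let C' : Finset ℂ := C ∪ (I ∪ I.image c)
  have mem_acl {x : ℂ} (hx : x ∈ C') : x ∈ acl ℚ (C' : Set ℂ) := subset_acl hx
  obtain ⟨S, -, S_infinite, progression⟩ := hSC.exists_infinite_progression_eq_zero
    (fun b hb => mem_acl (by simp [C', hb]))
    (fun b hb => mem_acl (by simpa [C'] using .inr (.inr ⟨b, hb, rfl⟩)))
    hinf (zeros_subset.trans (acl_mono (by simp [C'])))
    (fun z hz => (f_eq z).symm.trans hz.1)
  obtain ⟨z₀, hz₀, z₁, hz₁, hne⟩ := S_infinite.nontrivial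
  exact not_irreducible_of_progression (sub_ne_zero.2 hne.symm)
    (fun m => (f_eq _).trans (progression z₀ hz₀ z₁ hz₁ m)) irreducible
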